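/- arXiv:2109.01357 — 2 statements merged into one kernel-verified Lean document; each statement's English description precedes it below -/
import Mathlib

section
/- Let G and H be binary structures. The following are equivalent: (1) for all distinct i, i' ∈ G there exist j, j' ∈ H such that {(i,j),(i',j')} is a partial homomorphism from G to H, and every partial homomorphism {(i,j),(i',j')} with i ≠ i' from G to H extends to a total homomorphism G → H; (2) the rainbow relation algebra B_{G,H} is completely representable. -/
/-! ## Binary structures -/

/-- A binary structure: a carrier set together with a family of binary relations
indexed by a signature `σ` consisting of binary predicate symbols. -/
structure BinStruct (σ : Type) : Type 1 where
  V : Type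
  rel : σ → V → V → Prop

variable {σ : Type}

/-- The partial map `{(i,j),(i',j')}` is a partial homomorphism from `G` to `H`:
for all distinct elements of the domain and every binary predicate, the predicate
is preserved. -/
def PartialHom2 (G H : BinStruct σ) (i i' : G.V) (j j' : H.V) : Prop :=
  ∀ b : σ, (G.rel b i i' → H.rel b j j') ∧ (G.rel b i' i → H.rel b j' j)

/-- `f` is a (total) homomorphism from `G` to `H`. -/
def IsHom (G H : BinStruct σ) (f : G.V → H.V) : Prop :=
  ∀ (b : σ) (u v : G.V), u ≠ v → G.rel b u v → H.rel b (f u) (f v)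

/-! ## The rainbow atom structure -/

/-- Atoms of the rainbow relation algebra `B_{G,H}`. -/
inductive RbAtom (α β : Type) : Type
  | id : RbAtom α β
  | black : RbAtom α β
  | white : RbAtom α β
  | yellow : RbAtom α β
  | green (i : α) : RbAtom α β
  | red (j j' : β) : RbAtom α β

namespace RbAtom

/-- Converse of an atom: all atoms are self-converse except `(red j j')⌣ = red j' j`. -/
def conv {α β : Type} : RbAtom α β → RbAtom α β
  | red j j' => red j' j
  | a => a

end RbAtom

/-- The generating forbidden triples (I)–(VI) of the rainbow algebra `B_{G,H}`. -/
inductive BaseForbidden (G H : BinStruct σ) :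
    RbAtom G.V H.V → RbAtom G.V H.V → RbAtom G.V H.V → Prop
  | ident (a b : RbAtom G.V H.V) : a ≠ b → BaseForbidden G H .id a b
  | ggg (i i' i'' : G.V) : BaseForbidden G H (.green i) (.green i') (.green i'')
  | ggw (i i' : G.V) : BaseForbidden G H (.green i) (.green i') .white
  | yyy : BaseForbidden G H .yellow .yellow .yellow
  | yyb : BaseForbidden G H .yellow .yellow .black
  | rrr (j₁ j₂ j₂' j₃' j₁s j₃s : H.V) : ¬(j₁ = j₁s ∧ j₂ = j₂' ∧ j₃' = j₃s) →
      BaseForbidden G H (.red j₁ j₂) (.red j₂' j₃') (.red j₁s j₃s)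
  | ggr (i i' : G.V) (j j' : H.V) : ¬(i ≠ i' ∧ PartialHom2 G H i i' j j') →
      BaseForbidden G H (.green i) (.green i') (.red j j')

/-- A triple of atoms is forbidden if it is a Peircean transform of one of the
generating forbidden triples. -/
def Forbidden (G H : BinStruct σ) (a b c : RbAtom G.V H.V) : Prop :=
  ∃ x y z : RbAtom G.V H.V, BaseForbidden G H x y z ∧
    ((a, b, c) = (x, y, z) ∨ (a, b, c) = (x.conv, z, y) ∨ (a, b, c) = (z, y.conv, x) ∨
     (a, b, c) = (y.conv, x.conv, z.conv) ∨ (a, b, c) = (y, z.conv, x.conv) ∨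
     (a, b, c) = (z.conv, x, y.conv))

/-! ## The rainbow relation algebra (complex algebra of the atom structure) -/

/-- Composition in the complex algebra: `c ≤ X ; Y` iff there are `a ∈ X`, `b ∈ Y`
such that the triple `(a, b, c)` is not forbidden. -/
def rbComp (G H : BinStruct σ) (X Y : Set (RbAtom G.V H.V)) : Set (RbAtom G.V H.V) :=
  {c | ∃ a ∈ X, ∃ b ∈ Y, ¬ Forbidden G H a b c}

/-- Converse in the complex algebra. -/
def rbConv {α β : Type} (X : Set (RbAtom α β)) : Set (RbAtom α β) :=
  {a | RbAtom.conv a ∈ X}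

/-- The rainbow relation algebra `B_{G,H}` is completely representable: there is an
isomorphism onto an algebra of binary relations on some base set (with union,
complement, relational composition, converse and the identity relation) carrying
all suprema to unions. -/
def CompletelyRepresentable (G H : BinStruct σ) : Prop :=
  ∃ (X : Type) (θ : Set (RbAtom G.V H.V) → Set (X × X)),
    Function.Injective θ ∧
    (∀ S : Set (Set (RbAtom G.V H.V)), θ (⋃₀ S) = ⋃₀ (θ '' S)) ∧
    (∀ A : Set (RbAtom G.V H.V), θ Aᶜ = θ Set.univ \ θ A) ∧
    (∀ A B : Set (RbAtom G.V H.V),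
        θ (rbComp G H A B) = {p : X × X | ∃ z : X, (p.1, z) ∈ θ A ∧ (z, p.2) ∈ θ B}) ∧
    (∀ A : Set (RbAtom G.V H.V), θ (rbConv A) = {p : X × X | (p.2, p.1) ∈ θ A}) ∧
    θ {RbAtom.id} = {p : X × X | p.1 = p.2}

/-! ## The colouring game -/

/-- The set of vertices coloured (according to the interpretation `g`) with exactly
the colours in a palette `π`. -/
def PaletteSet {V : Type} {c : ℕ} (g : Fin c → Set V) (π : Set (Fin c)) : Set V :=
  {x | ∀ t : Fin c, x ∈ g t ↔ t ∈ π}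

/-- The position `(g,h)` of the `c`-colour colouring game on `(G,H)` is an immediate
win for ∀: (C1) some palette is realised in exactly one of the two structures, or
(C2) some pair of palettes and binary predicate produce a nonempty intersection in
exactly one of the two structures. -/
def ColWin (G H : BinStruct σ) (c : ℕ)
    (g : Fin c → Set G.V) (h : Fin c → Set H.V) : Prop :=
  (∃ π : Set (Fin c), Xor' (PaletteSet g π = ∅) (PaletteSet h π = ∅)) ∨
  (∃ (π π' : Set (Fin c)) (b : σ),
      Xor' ((PaletteSet g π ×ˢ PaletteSet g π') ∩ {q | G.rel b q.1 q.2} = ∅)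
           ((PaletteSet h π ×ˢ PaletteSet h π') ∩ {q | H.rel b q.1 q.2} = ∅))

/-- `∃` has a winning strategy in the infinitely long `c`-colour colouring game
`G^c_ω(G,H)` starting from the position `(g,h)`: there is an invariant family of safe
positions containing `(g,h)`, avoiding wins for `∀`, such that every move of `∀`
(a colour together with a set of vertices of either structure) has a response by `∃`
(a set of vertices of the other structure) staying in the family. -/
def ExSurvives (G H : BinStruct σ) (c : ℕ)
    (g : Fin c → Set G.V) (h : Fin c → Set H.V) : Prop :=
  ∃ Inv : (Fin c → Set G.V) → (Fin c → Set H.V) → Prop,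
    Inv g h ∧
    (∀ g' h', Inv g' h' → ¬ ColWin G H c g' h') ∧
    (∀ g' h', Inv g' h' → ∀ (t : Fin c) (S : Set G.V), ∃ T : Set H.V,
        Inv (Function.update g' t S) (Function.update h' t T)) ∧
    (∀ g' h', Inv g' h' → ∀ (t : Fin c) (T : Set H.V), ∃ S : Set G.V,
        Inv (Function.update g' t S) (Function.update h' t T))

/-- `∀` can force a win in the colouring game from the position `(g,h)`:
either the position is already a win for him, or he has a move such that
every response of `∃` leads to a position from which he can force a win. -/
inductive AllForcesWin (G H : BinStruct σ) (c : ℕ) :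
    (Fin c → Set G.V) → (Fin c → Set H.V) → Prop
  | now (g h) : ColWin G H c g h → AllForcesWin G H c g h
  | moveG (g h) (t : Fin c) (S : Set G.V) :
      (∀ T : Set H.V,
        AllForcesWin G H c (Function.update g t S) (Function.update h t T)) →
      AllForcesWin G H c g h
  | moveH (g h) (t : Fin c) (T : Set H.V) :
      (∀ S : Set G.V,
        AllForcesWin G H c (Function.update g t S) (Function.update h t T)) →
      AllForcesWin G H c g h

/-! ## Relation algebras, terms and formulas -/

/-- A relation algebra (Tarski's axioms): a Boolean algebra with an associative,
additive composition `;` with two-sided identity `1'`, and an additive involutive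
converse satisfying the Peircean/Tarski axioms. -/
class RelationAlgebra (A : Type) extends BooleanAlgebra A where
  comp : A → A → A
  conv : A → A
  one' : A
  comp_assoc : ∀ x y z : A, comp (comp x y) z = comp x (comp y z)
  comp_one' : ∀ x : A, comp x one' = x
  one'_comp : ∀ x : A, comp one' x = x
  sup_comp : ∀ x y z : A, comp (x ⊔ y) z = comp x z ⊔ comp y z
  comp_sup : ∀ x y z : A, comp x (y ⊔ z) = comp x y ⊔ comp x z
  conv_conv : ∀ x : A, conv (conv x) = x
  conv_sup : ∀ x y : A, conv (x ⊔ y) = conv x ⊔ conv y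
  conv_comp : ∀ x y : A, conv (comp x y) = comp (conv y) (conv x)
  tarski : ∀ x y : A, comp (conv x) (comp x y)ᶜ ⊓ y = ⊥

/-- A relation algebra is representable (a member of RRA) if it is isomorphic to a
subalgebra of an algebra of binary relations on some base set, with union,
complement, relational composition, converse and the identity relation. -/
def Representable (A : Type) [RelationAlgebra A] : Prop :=
  ∃ (X : Type) (θ : A → Set (X × X)),
    Function.Injective θ ∧
    (∀ a b : A, θ (a ⊔ b) = θ a ∪ θ b) ∧
    (∀ a : A, θ aᶜ = θ ⊤ \ θ a) ∧
    (∀ a b : A, θ (RelationAlgebra.comp a b) =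
        {p : X × X | ∃ z : X, (p.1, z) ∈ θ a ∧ (z, p.2) ∈ θ b}) ∧
    (∀ a : A, θ (RelationAlgebra.conv a) = {p : X × X | (p.2, p.1) ∈ θ a}) ∧
    θ RelationAlgebra.one' = {p : X × X | p.1 = p.2}

/-- A signature of relation-algebra operations on a carrier `A` (used to interpret
relation-algebra terms both in abstract relation algebras and in the concrete
rainbow complex algebras). -/
structure RAOps (A : Type) where
  bot : A
  top : A
  one' : A
  sup : A → A → A
  inf : A → A → A
  compl : A → A
  comp : A → A → A
  conv : A → A

/-- The operations of an abstract relation algebra. -/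
def RAOps.ofClass (A : Type) [RelationAlgebra A] : RAOps A :=
  ⟨⊥, ⊤, RelationAlgebra.one', (· ⊔ ·), (· ⊓ ·), (·ᶜ), RelationAlgebra.comp,
    RelationAlgebra.conv⟩

/-- The operations of the rainbow complex algebra `B_{G,H}`. -/
def rbOps (G H : BinStruct σ) : RAOps (Set (RbAtom G.V H.V)) :=
  ⟨∅, Set.univ, {RbAtom.id}, (· ∪ ·), (· ∩ ·), (·ᶜ), rbComp G H, rbConv⟩

/-- Terms in the language of relation algebras with variables `x_0, …, x_{c-1}`. -/
inductive RATerm (c : ℕ) : Type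
  | var (i : Fin c) : RATerm c
  | bot : RATerm c
  | top : RATerm c
  | one' : RATerm c
  | sup (s t : RATerm c) : RATerm c
  | inf (s t : RATerm c) : RATerm c
  | compl (t : RATerm c) : RATerm c
  | comp (s t : RATerm c) : RATerm c
  | conv (t : RATerm c) : RATerm c

namespace RATerm

variable {c : ℕ} {A : Type}

/-- Evaluation of a term under a total assignment of the variables. -/
def eval (ops : RAOps A) (v : Fin c → A) : RATerm c → A
  | var i => v i
  | bot => ops.bot
  | top => ops.top
  | one' => ops.one'
  | sup s t => ops.sup (s.eval ops v) (t.eval ops v)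
  | inf s t => ops.inf (s.eval ops v) (t.eval ops v)
  | compl t => ops.compl (t.eval ops v)
  | comp s t => ops.comp (s.eval ops v) (t.eval ops v)
  | conv t => ops.conv (t.eval ops v)

/-- Evaluation of a term under a partial assignment of the variables; defined
just when every variable of the term lies in the domain of the assignment. -/
def evalo (ops : RAOps A) (v : Fin c → Option A) : RATerm c → Option A
  | var i => v i
  | bot => some ops.bot
  | top => some ops.top
  | one' => some ops.one'
  | sup s t => (s.evalo ops v).bind fun a => (t.evalo ops v).map fun b => ops.sup a b
  | inf s t => (s.evalo ops v).bind fun a => (t.evalo ops v).map fun b => ops.inf a b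
  | compl t => (t.evalo ops v).map ops.compl
  | comp s t => (s.evalo ops v).bind fun a => (t.evalo ops v).map fun b => ops.comp a b
  | conv t => (t.evalo ops v).map ops.conv

/-- The variables occurring in a term. -/
def vars : RATerm c → Finset (Fin c)
  | var i => {i}
  | bot => ∅
  | top => ∅
  | one' => ∅
  | sup s t => s.vars ∪ t.vars
  | inf s t => s.vars ∪ t.vars
  | compl t => t.vars
  | comp s t => s.vars ∪ t.vars
  | conv t => t.vars

end RATerm

/-- First-order formulas in the language of relation algebras with variables
`x_0, …, x_{c-1}`. -/
inductive RAFormula (c : ℕ) : Type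
  | eq (s t : RATerm c) : RAFormula c
  | not (φ : RAFormula c) : RAFormula c
  | and (φ ψ : RAFormula c) : RAFormula c
  | ex (i : Fin c) (φ : RAFormula c) : RAFormula c

namespace RAFormula

variable {c : ℕ} {A : Type}

/-- Quantifier depth of a formula. -/
def qd : RAFormula c → ℕ
  | eq _ _ => 0
  | not φ => φ.qd
  | and φ ψ => max φ.qd ψ.qd
  | ex _ φ => φ.qd + 1

/-- Free variables of a formula. -/
def freeVars : RAFormula c → Finset (Fin c)
  | eq s t => s.vars ∪ t.vars
  | not φ => φ.freeVars
  | and φ ψ => φ.freeVars ∪ ψ.freeVars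
  | ex i φ => φ.freeVars \ {i}

/-- Satisfaction of a formula under a total assignment of the variables. -/
def Sat (ops : RAOps A) (v : Fin c → A) : RAFormula c → Prop
  | eq s t => s.eval ops v = t.eval ops v
  | not φ => ¬ Sat ops v φ
  | and φ ψ => Sat ops v φ ∧ Sat ops v ψ
  | ex i φ => ∃ a : A, Sat ops (Function.update v i a) φ

end RAFormula

/-! ## The pebble equivalence game on relation algebras -/

/-- The position `(α,β)` of the pebble game is good for `∃`: the two partial maps have
the same domain and the correspondence `t^α ↦ t^β` between the generated subalgebras
(given by evaluating terms whose variables lie in the common domain) is a well-defined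
isomorphism. -/
def GoodPos {A B : Type} (opsA : RAOps A) (opsB : RAOps B) (c : ℕ)
    (α : Fin c → Option A) (β : Fin c → Option B) : Prop :=
  (∀ i : Fin c, (α i).isSome ↔ (β i).isSome) ∧
  ∀ s t : RATerm c,
    (s.evalo opsA α = t.evalo opsA α ↔ s.evalo opsB β = t.evalo opsB β)

/-- `∃` has a winning strategy in the `c`-pebble, `n`-round equivalence game
`Γ^c_n(A, α, B, β)` (for finite `n`). -/
def ExWinsPebble {A B : Type} (opsA : RAOps A) (opsB : RAOps B) (c : ℕ) :
    ℕ → (Fin c → Option A) → (Fin c → Option B) → Prop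
  | 0, α, β => GoodPos opsA opsB c α β
  | n + 1, α, β => GoodPos opsA opsB c α β ∧
      (∀ (t : Fin c) (a : A), ∃ b : B,
        ExWinsPebble opsA opsB c n
          (Function.update α t (some a)) (Function.update β t (some b))) ∧
      (∀ (t : Fin c) (b : B), ∃ a : A,
        ExWinsPebble opsA opsB c n
          (Function.update α t (some a)) (Function.update β t (some b)))

/-- `∃` has a winning strategy in the infinitely long `c`-pebble equivalence game
`Γ^c_ω(A, α, B, β)`. -/
def ExWinsPebbleOmega {A B : Type} (opsA : RAOps A) (opsB : RAOps B) (c : ℕ)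
    (α : Fin c → Option A) (β : Fin c → Option B) : Prop :=
  ∃ Inv : (Fin c → Option A) → (Fin c → Option B) → Prop,
    Inv α β ∧
    (∀ α' β', Inv α' β' → GoodPos opsA opsB c α' β') ∧
    (∀ α' β', Inv α' β' → ∀ (t : Fin c) (a : A), ∃ b : B,
        Inv (Function.update α' t (some a)) (Function.update β' t (some b))) ∧
    (∀ α' β', Inv α' β' → ∀ (t : Fin c) (b : B), ∃ a : A,
        Inv (Function.update α' t (some a)) (Function.update β' t (some b)))

/-- `∃` has a winning strategy in the `c`-pebble, `n`-round equivalence game, where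
`n ≤ ω` (`n : ℕ∞`). -/
def ExWinsPebbleE {A B : Type} (opsA : RAOps A) (opsB : RAOps B) (c : ℕ)
    (n : ℕ∞) (α : Fin c → Option A) (β : Fin c → Option B) : Prop :=
  match n with
  | ⊤ => ExWinsPebbleOmega opsA opsB c α β
  | (m : ℕ) => ExWinsPebble opsA opsB c m α β

/-! ## The mirroring strategy -/

/-- The set of green subscripts of an element of a rainbow algebra. -/
def greenPart {V F : Type} (x : Set (RbAtom V F)) : Set V := {i | RbAtom.green i ∈ x}

/-- The element of the other rainbow algebra with the same non-green part as `x` and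
green part determined by `Y`. -/
def mirrorElt {V W F : Type} (x : Set (RbAtom V F)) (Y : Set W) : Set (RbAtom W F) :=
  fun a => match a with
  | RbAtom.green j => j ∈ Y
  | RbAtom.id => RbAtom.id ∈ x
  | RbAtom.black => RbAtom.black ∈ x
  | RbAtom.white => RbAtom.white ∈ x
  | RbAtom.yellow => RbAtom.yellow ∈ x
  | RbAtom.red j j' => RbAtom.red j j' ∈ x

/-- Inclusion of the first `c` colours into the `c+3` colours of the parallel game. -/
def liftCol {c : ℕ} (t : Fin c) : Fin (c + 3) := Fin.castLE (Nat.le_add_right c 3) t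

/-- A combined state of a play of the pebble game `Γ^c(B_{G,F}, B_{H,F})` together
with the parallel play of the colouring game `G^{c+3}_ω(G,H)`, recording also the
set of colours used so far. -/
structure MirrorState (c : ℕ) (G H F : BinStruct σ) : Type where
  α : Fin c → Option (Set (RbAtom G.V F.V))
  β : Fin c → Option (Set (RbAtom H.V F.V))
  g : Fin (c + 3) → Set G.V
  h : Fin (c + 3) → Set H.V
  used : Set (Fin (c + 3))

/-- The initial state: no pebbles placed, all vertices uncoloured, no colour used. -/
def mirrorInit (c : ℕ) (G H F : BinStruct σ) : MirrorState c G H F :=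
  ⟨fun _ => none, fun _ => none, fun _ => ∅, fun _ => ∅, ∅⟩

/-- `Inv` is a winning invariant witnessing a winning strategy for `∃` in the
colouring game `G^c_ω(G,H)` (from the initial position). -/
def IsColInvariant (G H : BinStruct σ) (c : ℕ)
    (Inv : (Fin c → Set G.V) → (Fin c → Set H.V) → Prop) : Prop :=
  Inv (fun _ => ∅) (fun _ => ∅) ∧
  (∀ g h, Inv g h → ¬ ColWin G H c g h) ∧
  (∀ g h, Inv g h → ∀ (t : Fin c) (S : Set G.V), ∃ T : Set H.V,
      Inv (Function.update g t S) (Function.update h t T)) ∧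
  (∀ g h, Inv g h → ∀ (t : Fin c) (T : Set H.V), ∃ S : Set G.V,
      Inv (Function.update g t S) (Function.update h t T))

/-- One round of the pebble game `Γ^c(B_{G,F}, B_{H,F})` in which `∃` plays the
mirroring strategy induced by the colouring-game winning strategy witnessed by the
invariant `Inv`: when `∀` plays pebble `t` on an element of one algebra, `∃` colours
the set of its green subscripts with colour `t` in the parallel colouring game,
obtains a response keeping the parallel play inside `Inv`, and answers with the
element with identical non-green part and green part determined by that response. -/
inductive MirrorStep (G H F : BinStruct σ) (c : ℕ)
    (Inv : (Fin (c + 3) → Set G.V) → (Fin (c + 3) → Set H.V) → Prop) :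
    MirrorState c G H F → MirrorState c G H F → Prop
  | fromG (s : MirrorState c G H F) (t : Fin c) (x : Set (RbAtom G.V F.V)) (Y : Set H.V) :
      Inv (Function.update s.g (liftCol t) (greenPart x))
          (Function.update s.h (liftCol t) Y) →
      MirrorStep G H F c Inv s
        ⟨Function.update s.α t (some x),
         Function.update s.β t (some (mirrorElt x Y)),
         Function.update s.g (liftCol t) (greenPart x),
         Function.update s.h (liftCol t) Y,
         insert (liftCol t) s.used⟩
  | fromH (s : MirrorState c G H F) (t : Fin c) (y : Set (RbAtom H.V F.V)) (X : Set G.V) :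
      Inv (Function.update s.g (liftCol t) X)
          (Function.update s.h (liftCol t) (greenPart y)) →
      MirrorStep G H F c Inv s
        ⟨Function.update s.α t (some (mirrorElt y X)),
         Function.update s.β t (some y),
         Function.update s.g (liftCol t) X,
         Function.update s.h (liftCol t) (greenPart y),
         insert (liftCol t) s.used⟩

/-- The states reachable in a play of the pebble game `Γ^c(B_{G,F}, B_{H,F})`
during which `∃` plays using the mirroring strategy. -/
def MirrorReachable (G H F : BinStruct σ) (c : ℕ)
    (Inv : (Fin (c + 3) → Set G.V) → (Fin (c + 3) → Set H.V) → Prop)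
    (s : MirrorState c G H F) : Prop :=
  Relation.ReflTransGen (MirrorStep G H F c Inv) (mirrorInit c G H F) s

/-!
A complete representation is the same thing as a saturated network: a labelling of the pairs of
points of a nonempty set by atoms, without forbidden triangles, in which every composition of atoms
that could be witnessed is witnessed.

In a saturated network fix a base `x ≠ y`. For each `i` in `G` there is a point `z i` of the cone
over it: one joined to `x` by the green atom `g_i` and to `y` by the yellow atom. Rules (II) and
(III) leave only red labels between two such points, by rule (IV) these are `r_{f i, f i'}` for a
single map `f : G → H`, and by rule (V) `f` is a homomorphism. Choosing the cone so that it contains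
a given edge labelled `r_{j, j'}` makes `f` extend a given partial homomorphism.

Conversely a saturated network is obtained by Zorn's lemma, adding one missing witness at a time.
An edge between the new point and an old one can be labelled white or black unless both points lie
in the cone over a common base. The homomorphism extending the first red label in that cone is
remembered and prescribes all later labels there.
-/

section Atoms

variable {α β : Type}

theorem RbAtom.conv_involutive : Function.Involutive (RbAtom.conv : RbAtom α β → RbAtom α β) := by
  rintro (_ | _ | _ | _ | _ | _) <;> rfl

@[simp]
theorem RbAtom.conv_conv (a : RbAtom α β) : a.conv.conv = a :=
  conv_involutive a

@[simp]
theorem RbAtom.conv_id : (id : RbAtom α β).conv = id :=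
  rfl

@[simp]
theorem RbAtom.conv_green (i : α) : (green i : RbAtom α β).conv = green i :=
  rfl

@[simp]
theorem RbAtom.conv_yellow : (yellow : RbAtom α β).conv = yellow :=
  rfl

@[simp]
theorem RbAtom.conv_eq_id_iff {a : RbAtom α β} : a.conv = id ↔ a = id := by
  cases a <;> simp [conv]

@[simp]
theorem RbAtom.conv_eq_green_iff {a : RbAtom α β} {i : α} : a.conv = green i ↔ a = green i := by
  cases a <;> simp [conv]

@[simp]
theorem RbAtom.conv_eq_yellow_iff {a : RbAtom α β} : a.conv = yellow ↔ a = yellow := by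
  cases a <;> simp [conv]

end Atoms

section Forbidden

variable {G H : BinStruct σ} {a b c : RbAtom G.V H.V}

theorem PartialHom2.symm {i i' : G.V} {j j' : H.V} (h : PartialHom2 G H i i' j j') :
    PartialHom2 G H i' i j' j :=
  fun r => (h r).symm

theorem IsHom.partialHom2 {f : G.V → H.V} (hf : IsHom G H f) {i i' : G.V} (hne : i ≠ i') :
    PartialHom2 G H i i' (f i) (f i') :=
  fun r => ⟨hf r i i' hne, hf r i' i hne.symm⟩

theorem BaseForbidden.forbidden (h : BaseForbidden G H a b c) : Forbidden G H a b c :=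
  ⟨a, b, c, h, .inl rfl⟩

theorem Forbidden.conv_left (h : Forbidden G H a b c) : Forbidden G H a.conv c b := by
  obtain ⟨x, y, z, hb, h⟩ := h
  refine ⟨x, y, z, hb, ?_⟩
  simp only [Prod.mk.injEq] at h ⊢
  rcases h with ⟨rfl, rfl, rfl⟩ | ⟨rfl, rfl, rfl⟩ | ⟨rfl, rfl, rfl⟩ | ⟨rfl, rfl, rfl⟩ |
    ⟨rfl, rfl, rfl⟩ | ⟨rfl, rfl, rfl⟩ <;> simp

theorem Forbidden.conv_right (h : Forbidden G H a b c) : Forbidden G H c b.conv a := by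
  obtain ⟨x, y, z, hb, h⟩ := h
  refine ⟨x, y, z, hb, ?_⟩
  simp only [Prod.mk.injEq] at h ⊢
  rcases h with ⟨rfl, rfl, rfl⟩ | ⟨rfl, rfl, rfl⟩ | ⟨rfl, rfl, rfl⟩ | ⟨rfl, rfl, rfl⟩ |
    ⟨rfl, rfl, rfl⟩ | ⟨rfl, rfl, rfl⟩ <;> simp

theorem forbidden_conv_left_iff : Forbidden G H a.conv c b ↔ Forbidden G H a b c :=
  ⟨fun h => by simpa using h.conv_left, .conv_left⟩

theorem forbidden_conv_right_iff : Forbidden G H c b.conv a ↔ Forbidden G H a b c :=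
  ⟨fun h => by simpa using h.conv_right, .conv_right⟩

theorem forbidden_conv_iff : Forbidden G H b.conv a.conv c.conv ↔ Forbidden G H a b c := by
  rw [forbidden_conv_left_iff, forbidden_conv_right_iff, forbidden_conv_left_iff]

@[simp]
theorem forbidden_id_left_iff : Forbidden G H .id a b ↔ a ≠ b := by
  refine ⟨?_, fun h => (BaseForbidden.ident a b h).forbidden⟩
  rintro ⟨x, y, z, hb, h⟩ rfl
  cases hb <;> grind [RbAtom.conv, RbAtom.conv_conv]

@[simp]
theorem forbidden_id_mid_iff : Forbidden G H a .id b ↔ a ≠ b := by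
  rw [← forbidden_conv_iff]
  exact forbidden_id_left_iff.trans RbAtom.conv_involutive.injective.ne_iff

@[simp]
theorem forbidden_id_right_iff : Forbidden G H a b .id ↔ b ≠ a.conv := by
  rw [← forbidden_conv_left_iff, forbidden_id_mid_iff, ne_comm]

theorem not_forbidden_white (ha : a ≠ .id) (hc : c ≠ .id)
    (h : ∀ i i', a = .green i → c ≠ .green i') : ¬ Forbidden G H a .white c := by
  rintro ⟨x, y, z, hb, h'⟩
  cases hb <;> grind [RbAtom.conv, RbAtom.conv_conv]

theorem not_forbidden_black (ha : a ≠ .id) (hc : c ≠ .id) (h : a = .yellow → c ≠ .yellow) :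
    ¬ Forbidden G H a .black c := by
  rintro ⟨x, y, z, hb, h'⟩
  cases hb <;> grind [RbAtom.conv, RbAtom.conv_conv]

theorem not_forbidden_green_yellow {i : G.V} (hc : c ≠ .id) :
    ¬ Forbidden G H (.green i) .yellow c := by
  rintro ⟨x, y, z, hb, h⟩
  cases hb <;> grind [RbAtom.conv, RbAtom.conv_conv]

theorem not_forbidden_yellow_yellow_red (j j' : H.V) :
    ¬ Forbidden G H .yellow .yellow (.red j j') := by
  rintro ⟨x, y, z, hb, h⟩
  cases hb <;> grind [RbAtom.conv, RbAtom.conv_conv]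

theorem forbidden_green_green_red_iff {i i' : G.V} {j j' : H.V} :
    Forbidden G H (.green i) (.green i') (.red j j') ↔ ¬ (i ≠ i' ∧ PartialHom2 G H i i' j j') := by
  refine ⟨?_, fun h => (BaseForbidden.ggr i i' j j' h).forbidden⟩
  rintro ⟨x, y, z, hb, h⟩ ⟨hne, hp⟩
  have := hp.symm
  cases hb <;> grind [RbAtom.conv, RbAtom.conv_conv]

theorem forbidden_red_red_red_iff {j₁ j₂ j₂' j₃' k₁ k₃ : H.V} :
    Forbidden G H (.red j₁ j₂) (.red j₂' j₃') (.red k₁ k₃) ↔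
      ¬ (j₁ = k₁ ∧ j₂ = j₂' ∧ j₃' = k₃) := by
  refine ⟨?_, fun h => (BaseForbidden.rrr _ _ _ _ _ _ h).forbidden⟩
  rintro ⟨x, y, z, hb, h⟩
  cases hb <;> grind [RbAtom.conv, RbAtom.conv_conv]

theorem exists_eq_red_of_not_forbidden {i i' : G.V} (hc : c ≠ .id)
    (hg : ¬ Forbidden G H (.green i) (.green i') c) (hy : ¬ Forbidden G H .yellow .yellow c) :
    ∃ j j', c = .red j j' ∧ i ≠ i' ∧ PartialHom2 G H i i' j j' := by
  cases c with
  | id => exact absurd rfl hc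
  | black => exact absurd BaseForbidden.yyb.forbidden hy
  | white => exact absurd (BaseForbidden.ggw i i').forbidden hg
  | yellow => exact absurd BaseForbidden.yyy.forbidden hy
  | green k => exact absurd (BaseForbidden.ggg i i' k).forbidden hg
  | red j j' => exact ⟨j, j', rfl, not_not.1 (forbidden_green_green_red_iff.not.1 hg)⟩

end Forbidden

section Networks

variable {G H : BinStruct σ} {X : Type} {L : X → X → RbAtom G.V H.V}

/-- An atomic network over the rainbow atom structure: a labelling of the ordered pairs of points
by atoms in which no triangle is labelled by a forbidden triple. Only the pairs `(u, u)` are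
labelled `1'`, because the identity of an algebra of binary relations is genuine equality. -/
structure IsNetwork (G H : BinStruct σ) {X : Type} (L : X → X → RbAtom G.V H.V) : Prop where
  label_self : ∀ u, L u u = .id
  eq_of_label_eq_id : ∀ {u v}, L u v = .id → u = v
  label_conv : ∀ u v, L v u = (L u v).conv
  consistent : ∀ u w v, ¬ Forbidden G H (L u w) (L w v) (L u v)

/-- Every composition of atoms containing the label of an edge is witnessed by a point. -/
def IsSaturated (G H : BinStruct σ) {X : Type} (L : X → X → RbAtom G.V H.V) : Prop :=
  ∀ u v a b, ¬ Forbidden G H a b (L u v) → ∃ w, L u w = a ∧ L w v = b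

theorem IsNetwork.label_eq_id_iff (hL : IsNetwork G H L) {u v : X} : L u v = .id ↔ u = v :=
  ⟨hL.eq_of_label_eq_id, by rintro rfl; exact hL.label_self u⟩

theorem IsNetwork.forbidden_conv_label_comm (hL : IsNetwork G H L) {u v : X}
    {a b : RbAtom G.V H.V} :
    Forbidden G H a b.conv (L u v) ↔ Forbidden G H b a.conv (L v u) := by
  rw [← forbidden_conv_iff, RbAtom.conv_conv, ← hL.label_conv]

theorem IsSaturated.exists_label_eq (hs : IsSaturated G H L) (hL : IsNetwork G H L) (u : X)
    (a : RbAtom G.V H.V) : ∃ v, L u v = a := by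
  obtain ⟨v, hv, -⟩ := hs u u a a.conv (by simp [hL.label_self])
  exact ⟨v, hv⟩

theorem IsNetwork.completelyRepresentable [Nonempty X] (hL : IsNetwork G H L)
    (hs : IsSaturated G H L) : CompletelyRepresentable G H := by
  refine ⟨X, fun A => {p | L p.1 p.2 ∈ A}, ?_, ?_, ?_, ?_, ?_, ?_⟩
  · obtain ⟨u⟩ := ‹Nonempty X›
    refine fun A B hAB => Set.ext fun a => ?_
    obtain ⟨v, rfl⟩ := hs.exists_label_eq hL u a
    exact Set.ext_iff.1 hAB (u, v)
  · intro S
    ext p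
    simp
  · intro A
    ext p
    simp
  · intro A B
    ext ⟨u, v⟩
    constructor
    · rintro ⟨a, ha, b, hb, hab⟩
      obtain ⟨w, rfl, rfl⟩ := hs u v a b hab
      exact ⟨w, ha, hb⟩
    · rintro ⟨w, ha, hb⟩
      exact ⟨_, ha, _, hb, hL.consistent u w v⟩
  · intro A
    ext ⟨u, v⟩
    simp [rbConv, hL.label_conv u v]
  · ext ⟨u, v⟩
    exact hL.label_eq_id_iff

theorem mem_univ_of_mem_of_sUnion {α Y : Type*} {θ : Set α → Set Y}
    (hsup : ∀ S, θ (⋃₀ S) = ⋃₀ (θ '' S)) {A : Set α} {p : Y} (hp : p ∈ θ A) :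
    p ∈ θ Set.univ := by
  rw [← Set.union_univ A, ← Set.sUnion_pair, hsup]
  exact ⟨θ A, ⟨A, .inl rfl, rfl⟩, hp⟩

theorem exists_forall_mem_iff_of_sUnion_of_compl {α Y : Type*} {θ : Set α → Set Y}
    (hsup : ∀ S, θ (⋃₀ S) = ⋃₀ (θ '' S)) (hcompl : ∀ A, θ Aᶜ = θ Set.univ \ θ A) {p : Y}
    (hp : p ∈ θ Set.univ) : ∃ a, ∀ A, p ∈ θ A ↔ a ∈ A := by
  have mem_iff_singleton (A : Set α) : p ∈ θ A ↔ ∃ a ∈ A, p ∈ θ {a} := by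
    have h := hsup (singleton '' A)
    rw [Set.sUnion_image, Set.biUnion_of_singleton] at h
    simp [h]
  obtain ⟨a, -, ha⟩ := (mem_iff_singleton Set.univ).1 hp
  refine ⟨a, fun A => ⟨fun hA => ?_, fun hA => (mem_iff_singleton A).2 ⟨a, hA, ha⟩⟩⟩
  by_contra haA
  have : p ∈ θ Aᶜ := (mem_iff_singleton Aᶜ).2 ⟨a, haA, ha⟩
  exact (hcompl A ▸ this).2 hA

theorem rbConv_univ {α β : Type} : rbConv (Set.univ : Set (RbAtom α β)) = Set.univ :=
  rfl

theorem rbComp_univ : rbComp G H Set.univ Set.univ = Set.univ :=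
  Set.eq_univ_of_forall fun c => ⟨.id, trivial, c, trivial, by simp⟩

section Labelling

variable {θ : Set (RbAtom G.V H.V) → Set (X × X)}

theorem equivalence_mem_univ (hsup : ∀ S, θ (⋃₀ S) = ⋃₀ (θ '' S))
    (hcomp : ∀ A B, θ (rbComp G H A B) = {p | ∃ z, (p.1, z) ∈ θ A ∧ (z, p.2) ∈ θ B})
    (hconv : ∀ A, θ (rbConv A) = {p | (p.2, p.1) ∈ θ A}) (hid : θ {.id} = {p | p.1 = p.2}) :
    Equivalence fun u v => (u, v) ∈ θ Set.univ where
  refl u := by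
    have : (u, u) ∈ θ {.id} := hid ▸ rfl
    exact mem_univ_of_mem_of_sUnion hsup this
  symm {u v} h := by
    rw [← rbConv_univ, hconv]
    exact h
  trans {u v w} huv hvw := by
    rw [← rbComp_univ, hcomp]
    exact ⟨v, huv, hvw⟩

theorem isNetwork_of_forall_mem_iff {Y : Type} {f : Y → X} (hf : f.Injective)
    {L : Y → Y → RbAtom G.V H.V} (hL : ∀ u v A, (f u, f v) ∈ θ A ↔ L u v ∈ A)
    (hcomp : ∀ A B, θ (rbComp G H A B) = {p | ∃ z, (p.1, z) ∈ θ A ∧ (z, p.2) ∈ θ B})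
    (hconv : ∀ A, θ (rbConv A) = {p | (p.2, p.1) ∈ θ A}) (hid : θ {.id} = {p | p.1 = p.2}) :
    IsNetwork G H L where
  label_self u := by
    have : (f u, f u) ∈ θ {.id} := hid ▸ rfl
    exact (hL ..).1 this
  eq_of_label_eq_id {u v} h := by
    have : (f u, f v) ∈ θ {.id} := (hL ..).2 h
    rw [hid] at this
    exact hf this
  label_conv u v := by
    have : (f v, f u) ∈ θ (rbConv {L u v}) := by
      rw [hconv]
      exact (hL u v _).2 rfl
    have : (L v u).conv = L u v := (hL v u (rbConv _)).1 this
    rw [← this, RbAtom.conv_conv]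
  consistent u w v := by
    have : (f u, f v) ∈ θ (rbComp G H {L u w} {L w v}) := by
      rw [hcomp]
      exact ⟨f w, (hL ..).2 rfl, (hL ..).2 rfl⟩
    obtain ⟨_, rfl, _, rfl, h⟩ := (hL ..).1 this
    exact h

end Labelling

theorem CompletelyRepresentable.exists_isNetwork (h : CompletelyRepresentable G H) :
    ∃ (X : Type) (L : X → X → RbAtom G.V H.V), Nonempty X ∧ IsNetwork G H L ∧
      IsSaturated G H L := by
  obtain ⟨X, θ, hinj, hsup, hcompl, hcomp, hconv, hid⟩ := h
  have hunit := equivalence_mem_univ hsup hcomp hconv hid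
  obtain ⟨⟨x, y⟩, hxy⟩ : (θ Set.univ).Nonempty := by
    have hempty : θ ∅ = ∅ := by simpa using hsup ∅
    rw [Set.nonempty_iff_ne_empty, ← hempty]
    exact hinj.ne (Set.nonempty_iff_ne_empty.1 ⟨.id, trivial⟩)
  -- The unit need not be the full relation on the base, so restrict to one of its classes.
  have hclass (u v : {v // (x, v) ∈ θ Set.univ}) : (u.1, v.1) ∈ θ Set.univ :=
    hunit.trans (hunit.symm u.2) v.2
  choose L hL using fun u v => exists_forall_mem_iff_of_sUnion_of_compl hsup hcompl (hclass u v)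
  refine ⟨_, L, ⟨y, hxy⟩,
    isNetwork_of_forall_mem_iff Subtype.val_injective hL hcomp hconv hid, fun u v a b hab => ?_⟩
  have : (u.1, v.1) ∈ θ (rbComp G H {a} {b}) := (hL ..).2 ⟨a, rfl, b, rfl, hab⟩
  rw [hcomp] at this
  obtain ⟨w, huw, hwv⟩ := this
  exact ⟨⟨w, hunit.trans u.2 (mem_univ_of_mem_of_sUnion hsup huw)⟩, (hL u ⟨w, _⟩ {a}).1 huw,
    (hL ⟨w, _⟩ v {b}).1 hwv⟩

theorem completelyRepresentable_iff_exists_isNetwork :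
    CompletelyRepresentable G H ↔ ∃ (X : Type) (L : X → X → RbAtom G.V H.V),
      Nonempty X ∧ IsNetwork G H L ∧ IsSaturated G H L :=
  ⟨fun h => h.exists_isNetwork, fun ⟨_, _, _, hL, hs⟩ => hL.completelyRepresentable hs⟩

end Networks

section Cones

variable {G H : BinStruct σ} {X : Type} {L : X → X → RbAtom G.V H.V} {i i' : G.V} {x y u v : X}

/-- In a network labelled by `L`, the point `u` lies in the cone over the base `(x, y)`, with
tint `i`. -/
def InCone {α β X : Type} (L : X → X → RbAtom α β) (x y : X) (i : α) (u : X) : Prop :=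
  L x u = .green i ∧ L y u = .yellow

/-- The condition on `G` and `H` characterising complete representability of `B_{G,H}`. -/
structure PairHomsExtend (G H : BinStruct σ) : Prop where
  exists_partialHom2 : ∀ {i i' : G.V}, i ≠ i' → ∃ j j' : H.V, PartialHom2 G H i i' j j'
  exists_isHom : ∀ {i i' : G.V} {j j' : H.V}, i ≠ i' → PartialHom2 G H i i' j j' →
    ∃ f : G.V → H.V, IsHom G H f ∧ f i = j ∧ f i' = j'

theorem IsNetwork.exists_label_eq_red_of_inCone (hL : IsNetwork G H L) (hu : InCone L x y i u)
    (hv : InCone L x y i' v) (hne : u ≠ v) :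
    ∃ j j', L u v = .red j j' ∧ i ≠ i' ∧ PartialHom2 G H i i' j j' := by
  refine exists_eq_red_of_not_forbidden (mt hL.eq_of_label_eq_id hne) ?_ ?_
  · simpa [hL.label_conv x u, hu.1, hv.1] using hL.consistent u x v
  · simpa [hL.label_conv y u, hu.2, hv.2] using hL.consistent u y v

theorem IsNetwork.exists_forall_label_eq_red (hL : IsNetwork G H L) {I : Type} [Nontrivial I]
    {z : I → X} (hz : ∀ k l, k ≠ l → ∃ j j', L (z k) (z l) = .red j j') :
    ∃ f : I → H.V, ∀ k l, k ≠ l → L (z k) (z l) = .red (f k) (f l) := by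
  choose p q hpq using hz
  choose other hother using fun k : I => exists_ne k
  -- By (IV), the first index of the label of `(z k, z l)` depends only on `k`.
  have fst_eq (k l m) (hkl : k ≠ l) (hkm : k ≠ m) : p k l hkl = p k m hkm := by
    by_cases hlm : l = m
    · subst hlm
      rfl
    · have h := hL.consistent (z k) (z l) (z m)
      rw [hpq _ _ hkl, hpq _ _ hlm, hpq _ _ hkm, forbidden_red_red_red_iff, not_not] at h
      exact h.1
  have snd_eq (k l) (hkl : k ≠ l) : q k l hkl = p l k hkl.symm := by
    have h := hL.label_conv (z k) (z l)
    rw [hpq _ _ hkl, hpq _ _ hkl.symm] at h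
    exact (RbAtom.red.inj h).1.symm
  refine ⟨fun k => p k (other k) (hother k).symm, fun k l hkl => ?_⟩
  rw [hpq k l hkl, snd_eq, fst_eq k l (other k) hkl (hother k).symm,
    fst_eq l k (other l) hkl.symm (hother l).symm]

theorem IsNetwork.exists_isHom_of_inCone (hL : IsNetwork G H L) [Nontrivial G.V] {z : G.V → X}
    (hz : ∀ k, InCone L x y k (z k)) :
    ∃ f : G.V → H.V, IsHom G H f ∧ ∀ k l, k ≠ l → L (z k) (z l) = .red (f k) (f l) := by
  have hinj : z.Injective := fun k l hkl => by
    have := (hz k).1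
    rw [hkl, (hz l).1] at this
    exact (RbAtom.green.inj this).symm
  have hred (k l) (hkl : k ≠ l) := hL.exists_label_eq_red_of_inCone (hz k) (hz l) (hinj.ne hkl)
  obtain ⟨f, hf⟩ := hL.exists_forall_label_eq_red fun k l hkl =>
    (hred k l hkl).imp fun _ => Exists.imp fun _ => And.left
  refine ⟨f, fun r k l hkl hr => ?_, hf⟩
  obtain ⟨j, j', hlabel, -, hp⟩ := hred k l hkl
  obtain ⟨rfl, rfl⟩ := RbAtom.red.inj ((hf k l hkl).symm.trans hlabel)
  exact (hp r).1 hr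

theorem IsSaturated.exists_inCone (hs : IsSaturated G H L) (hL : IsNetwork G H L)
    (hxy : L x y ≠ .id) (k : G.V) : ∃ u, InCone L x y k u := by
  obtain ⟨u, hxu, huy⟩ := hs x y (.green k) .yellow (not_forbidden_green_yellow hxy)
  exact ⟨u, hxu, by rw [hL.label_conv u y, RbAtom.conv_eq_yellow_iff, huy]⟩

theorem IsSaturated.exists_partialHom2 [Nonempty X] (hs : IsSaturated G H L)
    (hL : IsNetwork G H L) (hne : i ≠ i') : ∃ j j', PartialHom2 G H i i' j j' := by
  have : Nontrivial G.V := ⟨i, i', hne⟩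
  obtain ⟨x⟩ := ‹Nonempty X›
  obtain ⟨y, hxy⟩ := hs.exists_label_eq hL x .black
  choose z hz using hs.exists_inCone hL (x := x) (y := y) (by simp [hxy])
  obtain ⟨f, hf, -⟩ := hL.exists_isHom_of_inCone hz
  exact ⟨f i, f i', hf.partialHom2 hne⟩

theorem IsSaturated.exists_isHom [Nonempty X] (hs : IsSaturated G H L) (hL : IsNetwork G H L)
    {j j' : H.V} (hne : i ≠ i') (hp : PartialHom2 G H i i' j j') :
    ∃ f : G.V → H.V, IsHom G H f ∧ f i = j ∧ f i' = j' := by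
  classical
  have : Nontrivial G.V := ⟨i, i', hne⟩
  obtain ⟨u⟩ := ‹Nonempty X›
  obtain ⟨v, huv⟩ := hs.exists_label_eq hL u (.red j j')
  obtain ⟨x, hux, hxv⟩ := hs u v (.green i) (.green i') <| by
    simpa [huv, forbidden_green_green_red_iff] using ⟨hne, hp⟩
  obtain ⟨y, huy, hyv⟩ := hs u v .yellow .yellow <|
    huv ▸ not_forbidden_yellow_yellow_red j j'
  have hu : InCone L x y i u := by
    simp [InCone, hL.label_conv u, hux, huy]
  have hxy : x ≠ y := by
    rintro rfl
    simp [hux] at huy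
  choose z hz using hs.exists_inCone hL (mt hL.eq_of_label_eq_id hxy)
  let z' := Function.update (Function.update z i u) i' v
  have hz' (k : G.V) : InCone L x y k (z' k) := by
    rcases eq_or_ne k i' with rfl | hk'
    · simpa [z'] using ⟨hxv, hyv⟩
    · rcases eq_or_ne k i with rfl | hk
      · simpa [z', hk'] using hu
      · simpa [z', hk', hk] using hz k
  obtain ⟨f, hf, hlabel⟩ := hL.exists_isHom_of_inCone hz'
  have h := hlabel i i' hne
  simp only [z', Function.update_self, Function.update_of_ne hne, huv] at h
  obtain ⟨rfl, rfl⟩ := RbAtom.red.inj h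
  exact ⟨f, hf, rfl, rfl⟩

theorem IsSaturated.pairHomsExtend [Nonempty X] (hs : IsSaturated G H L)
    (hL : IsNetwork G H L) : PairHomsExtend G H :=
  ⟨hs.exists_partialHom2 hL, hs.exists_isHom hL⟩

end Cones

section Guides

variable {G H : BinStruct σ} {X : Type} {L : X → X → RbAtom G.V H.V} {x y : X}

/-- The red labels prescribed between the points of a cone, as a function of their tints; they come
from a homomorphism, except that nothing is asked when there are no two tints, since then `H` may be
empty. -/
structure Guide (G H : BinStruct σ) where
  label : G.V → G.V → RbAtom G.V H.V
  exists_isHom : Nontrivial G.V →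
    ∃ f : G.V → H.V, IsHom G H f ∧ ∀ i k, label i k = .red (f i) (f k)

/-- The guide prescribed by a homomorphism. -/
def Guide.ofIsHom {f : G.V → H.V} (hf : IsHom G H f) : Guide G H where
  label i i' := .red (f i) (f i')
  exists_isHom _ := ⟨f, hf, fun _ _ => rfl⟩

theorem Guide.exists_label_eq (t : Guide G H) {i i' : G.V} (hne : i ≠ i') :
    ∃ f : G.V → H.V, IsHom G H f ∧ ∀ k k', t.label k k' = .red (f k) (f k') :=
  t.exists_isHom ⟨i, i', hne⟩

theorem Guide.conv_label (t : Guide G H) {i i' : G.V} (hne : i ≠ i') :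
    (t.label i i').conv = t.label i' i := by
  obtain ⟨f, -, hf⟩ := t.exists_label_eq hne
  simp only [hf, RbAtom.conv]

theorem PairHomsExtend.nonempty_guide (h : PairHomsExtend G H) : Nonempty (Guide G H) := by
  by_cases hG : Nontrivial G.V
  · obtain ⟨i, i', hne⟩ := hG
    obtain ⟨j, j', hp⟩ := h.exists_partialHom2 hne
    obtain ⟨f, hf, -⟩ := h.exists_isHom hne hp
    exact ⟨.ofIsHom hf⟩
  · exact ⟨⟨fun _ _ => .id, fun hG' => absurd hG' hG⟩⟩

/-- The labels between distinct points of the cone over `(x, y)` are those prescribed by `t`. -/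
def IsConeGuide (L : X → X → RbAtom G.V H.V) (x y : X) (t : Guide G H) : Prop :=
  ∀ i i' u v, InCone L x y i u → InCone L x y i' v → u ≠ v → L u v = t.label i i'

theorem PairHomsExtend.exists_isConeGuide (h : PairHomsExtend G H) (hL : IsNetwork G H L) {p q : X}
    (hpq : ∀ i u, InCone L x y i u → u = p ∨ u = q) : ∃ t, IsConeGuide L x y t := by
  by_cases hcone : ∃ i i', InCone L x y i p ∧ InCone L x y i' q ∧ p ≠ q
  · obtain ⟨i, i', hp, hq, hne⟩ := hcone
    obtain ⟨j, j', hlabel, htints, hhom⟩ := hL.exists_label_eq_red_of_inCone hp hq hne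
    obtain ⟨f, hf, rfl, rfl⟩ := h.exists_isHom htints hhom
    refine ⟨.ofIsHom hf, fun k k' u v hu hv huv => ?_⟩
    have tint_eq {k l : G.V} {u : X} (hu : InCone L x y k u) (hu' : InCone L x y l u) : k = l :=
      RbAtom.green.inj (hu.1.symm.trans hu'.1)
    rcases hpq k u hu with rfl | rfl <;> rcases hpq k' v hv with rfl | rfl
    · exact absurd rfl huv
    · rw [tint_eq hu hp, tint_eq hv hq, hlabel, Guide.ofIsHom]
    · rw [tint_eq hu hq, tint_eq hv hp, hL.label_conv v u, hlabel, Guide.ofIsHom, RbAtom.conv]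
    · exact absurd rfl huv
  · obtain ⟨t⟩ := h.nonempty_guide
    refine ⟨t, fun k k' u v hu hv huv => absurd ?_ hcone⟩
    rcases hpq k u hu with rfl | rfl <;> rcases hpq k' v hv with rfl | rfl
    · exact absurd rfl huv
    · exact ⟨k, k', hu, hv, huv⟩
    · exact ⟨k', k, hv, hu, huv.symm⟩
    · exact absurd rfl huv

/-- A network together with a guide for the cone over each base, fixed once and for all so that
cones acquire new points consistently. -/
structure IsGuidedNetwork {X : Type} (L : X → X → RbAtom G.V H.V) (t : X → X → Guide G H) : Prop
    extends IsNetwork G H L where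
  isConeGuide : ∀ x y, IsConeGuide L x y (t x y)

theorem IsGuidedNetwork.comp {t : X → X → Guide G H} (h : IsGuidedNetwork L t) {Y : Type}
    {f : Y → X} (hf : f.Injective) :
    IsGuidedNetwork (fun u v => L (f u) (f v)) fun u v => t (f u) (f v) where
  label_self u := h.label_self (f u)
  eq_of_label_eq_id huv := hf (h.eq_of_label_eq_id huv)
  label_conv u v := h.label_conv (f u) (f v)
  consistent u w v := h.consistent (f u) (f w) (f v)
  isConeGuide x y i i' u v hu hv huv :=
    h.isConeGuide (f x) (f y) i i' (f u) (f v) hu hv (hf.ne huv)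

end Guides

section AdjoinPoint

variable {G H : BinStruct σ} {X : Type} {L : X → X → RbAtom G.V H.V} {E : X → RbAtom G.V H.V}

/-- Extend a binary function to one new point `none`, by its values on the pairs ending at the new
point, on those starting there, and on the loop. -/
@[simp]
def adjoinPoint {β : Type} (f : X → X → β) (toNew fromNew : X → β) (loop : β) :
    Option X → Option X → β
  | some u, some v => f u v
  | some u, none => toNew u
  | none, some v => fromNew v
  | none, none => loop

/-- The labelling of one new point `none`, the edge from `v` to `none` being labelled `E v`. -/
abbrev adjoinLabel (L : X → X → RbAtom G.V H.V) (E : X → RbAtom G.V H.V) :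
    Option X → Option X → RbAtom G.V H.V :=
  adjoinPoint L E (fun v => (E v).conv) .id

theorem IsNetwork.adjoinLabel (hL : IsNetwork G H L) (hE : ∀ v, E v ≠ .id)
    (hcons : ∀ u v, ¬ Forbidden G H (E u) (E v).conv (L u v)) :
    IsNetwork G H (adjoinLabel L E) where
  label_self u := by cases u <;> simp [hL.label_self]
  eq_of_label_eq_id {u v} h := by
    cases u <;> cases v <;> simp_all [hL.label_eq_id_iff]
  label_conv u v := by
    match u, v with
    | none, none => rfl
    | none, some v => exact (E v).conv_conv.symm
    | some u, none => rfl
    | some u, some v => exact hL.label_conv u v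
  consistent u w v := by
    match u, w, v with
    | none, none, _ => simp
    | none, some w, none => simp
    | none, some w, some v =>
      simp only [adjoinPoint, hL.label_conv v w]
      rw [forbidden_conv_iff, ← forbidden_conv_right_iff]
      exact hcons v w
    | some u, none, none => simp
    | some u, none, some v => exact hcons u v
    | some u, some w, none => exact mt .conv_right (hcons u w)
    | some u, some w, some v => exact hL.consistent u w v

end AdjoinPoint

section FreeLabel

variable {G H : BinStruct σ} {t : Guide G H} {α γ a c e : RbAtom G.V H.V}

/-- `FreeLabel t α γ a c e` says that `e` is an admissible label for the edge from `v` to a new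
point `d`, when `α`, `γ`, `a`, `c` are the labels of `(p, d)`, `(q, d)`, `(p, v)`, `(q, v)`: white
or black where (II) and (III) allow it, and the label prescribed by the guide `t` of the cone over
`(p, q)` if both `v` and `d` lie in it. -/
inductive FreeLabel (t : Guide G H) (α γ a c : RbAtom G.V H.V) : RbAtom G.V H.V → Prop
  | white (hp : ∀ i k, α = .green i → a ≠ .green k) (hq : ∀ i k, γ = .green i → c ≠ .green k) :
      FreeLabel t α γ a c .white
  | black (hp : α = .yellow → a ≠ .yellow) (hq : γ = .yellow → c ≠ .yellow) :
      FreeLabel t α γ a c .black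
  | guided {i k : G.V} (hα : α = .green i) (ha : a = .green k) (hγ : γ = .yellow)
      (hc : c = .yellow) (hne : k ≠ i) : FreeLabel t α γ a c (t.label k i)

theorem exists_freeLabel (t : Guide G H) (hα : ∀ i, α = .yellow → γ ≠ .green i)
    (hne : α = a → γ ≠ c) : ∃ e, FreeLabel t α γ a c e := by
  by_cases hwhite : (∀ i k, α = .green i → a ≠ .green k) ∧ ∀ i k, γ = .green i → c ≠ .green k
  · exact ⟨_, .white hwhite.1 hwhite.2⟩
  by_cases hblack : (α = .yellow → a ≠ .yellow) ∧ (γ = .yellow → c ≠ .yellow)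
  · exact ⟨_, .black hblack.1 hblack.2⟩
  have hcone : ∃ i k, α = .green i ∧ a = .green k ∧ γ = .yellow ∧ c = .yellow := by grind
  obtain ⟨i, k, rfl, rfl, rfl, rfl⟩ := hcone
  exact ⟨_, .guided rfl rfl rfl rfl fun hki => hne (hki ▸ rfl) rfl⟩

theorem FreeLabel.eq_white_or_eq_black_or_eq_red (h : FreeLabel t α γ a c e) :
    e = .white ∨ e = .black ∨ ∃ j j', e = .red j j' := by
  cases h with
  | white => exact .inl rfl
  | black => exact .inr (.inl rfl)
  | guided _ _ _ _ hne =>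
    obtain ⟨f, -, hf⟩ := t.exists_label_eq hne
    exact .inr (.inr ⟨_, _, hf _ _⟩)

theorem FreeLabel.ne_id (h : FreeLabel t α γ a c e) : e ≠ .id := by
  rcases h.eq_white_or_eq_black_or_eq_red with rfl | rfl | ⟨_, _, rfl⟩ <;> simp

theorem FreeLabel.ne_yellow (h : FreeLabel t α γ a c e) : e ≠ .yellow := by
  rcases h.eq_white_or_eq_black_or_eq_red with rfl | rfl | ⟨_, _, rfl⟩ <;> simp

theorem FreeLabel.ne_green (h : FreeLabel t α γ a c e) (i : G.V) : e ≠ .green i := by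
  rcases h.eq_white_or_eq_black_or_eq_red with rfl | rfl | ⟨_, _, rfl⟩ <;> simp

theorem FreeLabel.eq_label {i k : G.V} (h : FreeLabel t (.green i) .yellow (.green k) .yellow e) :
    k ≠ i ∧ e = t.label k i := by
  cases h with
  | white hp _ => exact absurd rfl (hp i k rfl)
  | black _ hq => exact absurd rfl (hq rfl)
  | guided hα ha _ _ hne =>
    cases hα
    cases ha
    exact ⟨hne, rfl⟩

theorem Guide.not_forbidden_green_green_label (t : Guide G H) {i k : G.V} (hne : i ≠ k) :
    ¬ Forbidden G H (.green i) (.green k) (t.label i k) := by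
  obtain ⟨f, hf, hlabel⟩ := t.exists_label_eq hne
  rw [hlabel, forbidden_green_green_red_iff, not_not]
  exact ⟨hne, hf.partialHom2 hne⟩

theorem Guide.not_forbidden_yellow_yellow_label (t : Guide G H) {i k : G.V} (hne : i ≠ k) :
    ¬ Forbidden G H .yellow .yellow (t.label i k) := by
  obtain ⟨f, -, hlabel⟩ := t.exists_label_eq hne
  rw [hlabel]
  exact not_forbidden_yellow_yellow_red _ _

theorem FreeLabel.not_forbidden_left (h : FreeLabel t α γ a c e) (hα : α ≠ .id) (ha : a ≠ .id) :
    ¬ Forbidden G H a e α := by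
  cases h with
  | white hp _ => exact not_forbidden_white ha hα fun i k hi hk => hp k i hk hi
  | black hp _ => exact not_forbidden_black ha hα fun h h' => hp h' h
  | guided hα ha _ _ hne =>
    subst hα ha
    exact mt .conv_left (t.not_forbidden_green_green_label hne)

theorem FreeLabel.not_forbidden_right (h : FreeLabel t α γ a c e) (hγ : γ ≠ .id) (hc : c ≠ .id) :
    ¬ Forbidden G H c e γ := by
  cases h with
  | white _ hq => exact not_forbidden_white hc hγ fun i k hi hk => hq k i hk hi
  | black _ hq => exact not_forbidden_black hc hγ fun h h' => hq h' h
  | guided _ _ hγ hc hne =>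
    subst hγ hc
    exact mt .conv_left (t.not_forbidden_yellow_yellow_label hne)

end FreeLabel

section FreeExtension

variable {G H : BinStruct σ} {X : Type} {L : X → X → RbAtom G.V H.V} {t : Guide G H} {p q : X}
  {E : X → RbAtom G.V H.V}

theorem not_forbidden_white_or_black {a b c : RbAtom G.V H.V} (hb : b = .white ∨ b = .black)
    (ha : a ≠ .id) (hay : a ≠ .yellow) (hag : ∀ i, a ≠ .green i) (hc : c ≠ .id) :
    ¬ Forbidden G H a b c := by
  rcases hb with rfl | rfl
  · exact not_forbidden_white ha hc fun i _ hi => absurd hi (hag i)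
  · exact not_forbidden_black ha hc fun hy => absurd hy hay

theorem Guide.not_forbidden_label_label (t : Guide G H) {i k l : G.V} (hne : k ≠ i) :
    ¬ Forbidden G H (t.label k i) (t.label i l) (t.label k l) := by
  obtain ⟨f, -, hf⟩ := t.exists_label_eq hne
  simp [hf, forbidden_red_red_red_iff]

/-- The labels `E v` of the edges from `v` to a new point `d` are given at `p` and `q`, where they
fit the edge `(p, q)`, and free elsewhere. The base of a cone containing `d` can only be `(p, q)`,
as `(q, p)` is excluded by `ne_green`. -/
structure IsFreeExtension (L : X → X → RbAtom G.V H.V) (t : Guide G H) (p q : X)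
    (E : X → RbAtom G.V H.V) : Prop where
  ne_id_left : E p ≠ .id
  ne_id_right : E q ≠ .id
  not_forbidden : ¬ Forbidden G H (E p) (E q).conv (L p q)
  ne_green : ∀ i, E p = .yellow → E q ≠ .green i
  freeLabel : ∀ v, v ≠ p → v ≠ q → FreeLabel t (E p) (E q) (L p v) (L q v) (E v)

theorem IsFreeExtension.ne_id (hE : IsFreeExtension L t p q E) (v : X) : E v ≠ .id := by
  by_cases hp : v = p
  · exact hp ▸ hE.ne_id_left
  by_cases hq : v = q
  · exact hq ▸ hE.ne_id_right
  exact (hE.freeLabel v hp hq).ne_id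

theorem IsFreeExtension.eq_or_eq_of_yellow (hE : IsFreeExtension L t p q E) {v : X}
    (hv : E v = .yellow) : v = p ∨ v = q := by
  by_contra! h
  exact (hE.freeLabel v h.1 h.2).ne_yellow hv

theorem IsFreeExtension.eq_or_eq_of_green (hE : IsFreeExtension L t p q E) {v : X} {i : G.V}
    (hv : E v = .green i) : v = p ∨ v = q := by
  by_contra! h
  exact (hE.freeLabel v h.1 h.2).ne_green i hv

theorem IsConeGuide.not_forbidden_freeLabel (ht : IsConeGuide L p q t) (hL : IsNetwork G H L)
    {α γ e e' : RbAtom G.V H.V} {u v : X} (huv : u ≠ v)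
    (hu : FreeLabel t α γ (L p u) (L q u) e) (hv : FreeLabel t α γ (L p v) (L q v) e') :
    ¬ Forbidden G H e e'.conv (L u v) := by
  have hid : L u v ≠ .id := mt hL.eq_of_label_eq_id huv
  by_cases hv' : e' = .white ∨ e' = .black
  · refine not_forbidden_white_or_black ?_ hu.ne_id hu.ne_yellow hu.ne_green hid
    exact hv'.imp (by rintro rfl; rfl) (by rintro rfl; rfl)
  by_cases hu' : e = .white ∨ e = .black
  · rw [hL.forbidden_conv_label_comm]
    refine not_forbidden_white_or_black ?_ hv.ne_id hv.ne_yellow hv.ne_green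
      (mt hL.eq_of_label_eq_id huv.symm)
    exact hu'.imp (by rintro rfl; rfl) (by rintro rfl; rfl)
  cases hu with
  | white => exact absurd (.inl rfl) hu'
  | black => exact absurd (.inr rfl) hu'
  | @guided i k hα hpu hγ hqu hki =>
    cases hv with
    | white => exact absurd (.inl rfl) hv'
    | black => exact absurd (.inr rfl) hv'
    | @guided i' l hα' hpv hγ' hqv hli =>
      obtain rfl : i = i' := RbAtom.green.inj (hα.symm.trans hα')
      rw [t.conv_label hli, ht k l u v ⟨hpu, hqu⟩ ⟨hpv, hqv⟩ huv]
      exact t.not_forbidden_label_label hki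

theorem IsFreeExtension.not_forbidden_of_freeLabel (hE : IsFreeExtension L t p q E)
    (hL : IsNetwork G H L) {u v : X} (hu : u = p ∨ u = q) (hv : ¬ (v = p ∨ v = q)) :
    ¬ Forbidden G H (E u) (E v).conv (L u v) := by
  push Not at hv
  have hfree := hE.freeLabel v hv.1 hv.2
  rw [forbidden_conv_right_iff]
  rcases hu with rfl | rfl
  · exact hfree.not_forbidden_left hE.ne_id_left (mt hL.eq_of_label_eq_id hv.1.symm)
  · exact hfree.not_forbidden_right hE.ne_id_right (mt hL.eq_of_label_eq_id hv.2.symm)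

theorem IsFreeExtension.isNetwork (hE : IsFreeExtension L t p q E) (hL : IsNetwork G H L)
    (ht : IsConeGuide L p q t) : IsNetwork G H (adjoinLabel L E) := by
  refine hL.adjoinLabel hE.ne_id fun u v => ?_
  by_cases huv : u = v
  · simp [huv, hL.label_self]
  by_cases hu : u = p ∨ u = q <;> by_cases hv : v = p ∨ v = q
  · rcases hu with rfl | rfl <;> rcases hv with rfl | rfl
    · exact absurd rfl huv
    · exact hE.not_forbidden
    · exact mt hL.forbidden_conv_label_comm.1 hE.not_forbidden
    · exact absurd rfl huv
  · exact hE.not_forbidden_of_freeLabel hL hu hv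
  · exact mt hL.forbidden_conv_label_comm.1 (hE.not_forbidden_of_freeLabel hL hv hu)
  · push Not at hu hv
    exact ht.not_forbidden_freeLabel hL huv (hE.freeLabel u hu.1 hu.2) (hE.freeLabel v hv.1 hv.2)

theorem IsFreeExtension.eq_of_green_of_yellow (hE : IsFreeExtension L t p q E) {x y : X} {i : G.V}
    (hx : E x = .green i) (hy : E y = .yellow) : x = p ∧ y = q := by
  have hne : x ≠ y := by
    rintro rfl
    simp [hx] at hy
  rcases hE.eq_or_eq_of_green hx with rfl | rfl <;> rcases hE.eq_or_eq_of_yellow hy with rfl | rfl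
  · exact absurd rfl hne
  · exact ⟨rfl, rfl⟩
  · exact absurd hx (hE.ne_green i hy)
  · exact absurd rfl hne

theorem IsFreeExtension.eq_label_of_inCone (hE : IsFreeExtension L t p q E) (hL : IsNetwork G H L)
    {i k : G.V} {u : X} (hp : E p = .green i) (hq : E q = .yellow) (hu : InCone L p q k u) :
    k ≠ i ∧ E u = t.label k i := by
  have hup : u ≠ p := by
    rintro rfl
    simpa [hL.label_self] using hu.1
  have huq : u ≠ q := by
    rintro rfl
    simpa [hL.label_self] using hu.2
  have hfree := hE.freeLabel u hup huq
  rw [hp, hq, hu.1, hu.2] at hfree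
  exact hfree.eq_label

theorem IsFreeExtension.isConeGuide_some (hE : IsFreeExtension L t p q E) (hL : IsNetwork G H L)
    {x y : X} {s : Guide G H} (hs : IsConeGuide L x y s) (hst : x = p → y = q → s = t) :
    IsConeGuide (adjoinLabel L E) (some x) (some y) s := by
  have eq_label {i k : G.V} {u : X} (hx : E x = .green i) (hy : E y = .yellow)
      (hu : InCone L x y k u) : k ≠ i ∧ E u = s.label k i := by
    obtain ⟨rfl, rfl⟩ := hE.eq_of_green_of_yellow hx hy
    exact hst rfl rfl ▸ hE.eq_label_of_inCone hL hx hy hu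
  intro i i' u v hu hv huv
  match u, v with
  | none, none => exact absurd rfl huv
  | some u, none => exact (eq_label hv.1 hv.2 hu).2
  | none, some v =>
    obtain ⟨hne, hlabel⟩ := eq_label hu.1 hu.2 hv
    rw [adjoinLabel, adjoinPoint, hlabel, s.conv_label hne]
  | some u, some v => exact hs i i' u v hu hv fun h => huv (congrArg some h)

theorem IsFreeExtension.exists_isConeGuide_none (hE : IsFreeExtension L t p q E)
    (h : PairHomsExtend G H) (hL : IsNetwork G H (adjoinLabel L E)) {x y : Option X}
    (hxy : x = none ∨ y = none) : ∃ s, IsConeGuide (adjoinLabel L E) x y s := by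
  refine h.exists_isConeGuide hL (p := some p) (q := some q) fun i u hu => ?_
  match u with
  | none => rcases hxy with rfl | rfl <;> simp [InCone] at hu
  | some u =>
    simp only [Option.some.injEq]
    rcases hxy with rfl | rfl
    · exact hE.eq_or_eq_of_green (RbAtom.conv_eq_green_iff.1 hu.1)
    · exact hE.eq_or_eq_of_yellow (RbAtom.conv_eq_yellow_iff.1 hu.2)

end FreeExtension

section Defects

variable {G H : BinStruct σ} {X : Type} {L : X → X → RbAtom G.V H.V} {τ : X → X → Guide G H}
  {p q : X} {E : X → RbAtom G.V H.V} {a b : RbAtom G.V H.V}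

theorem IsFreeExtension.exists_isGuidedNetwork
    (hE : IsFreeExtension L (τ p q) p q E) (h : PairHomsExtend G H) (hL : IsGuidedNetwork L τ) :
    ∃ τ' : Option X → Option X → Guide G H,
      IsGuidedNetwork (adjoinLabel L E) τ' ∧ ∀ u v, τ' (some u) (some v) = τ u v := by
  have hL' := hE.isNetwork hL.toIsNetwork (hL.isConeGuide p q)
  choose s hs using fun (x y : Option X) (hxy : x = none ∨ y = none) =>
    hE.exists_isConeGuide_none h hL' hxy
  refine ⟨adjoinPoint τ (fun x => s (some x) none (.inr rfl)) (fun y => s none (some y) (.inl rfl))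
    (s none none (.inl rfl)), ⟨hL', fun x y => ?_⟩, fun _ _ => rfl⟩
  match x, y with
  | none, none => exact hs _ _ _
  | none, some y => exact hs _ _ _
  | some x, none => exact hs _ _ _
  | some x, some y =>
    exact hE.isConeGuide_some hL.toIsNetwork (hL.isConeGuide x y) fun hx hy => by
      rw [hx, hy, adjoinPoint]

theorem IsNetwork.exists_isFreeExtension (hL : IsNetwork G H L) (t : Guide G H) (ha : a ≠ .id)
    (hb : b ≠ .id) (hab : ¬ Forbidden G H a b (L p q)) (hwitness : ¬ ∃ w, L p w = a ∧ L w q = b)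
    (horient : ∀ i, a = .yellow → b ≠ .green i) :
    ∃ E, IsFreeExtension L t p q E ∧ E p = a ∧ E q = b.conv := by
  classical
  have hfree (v : X) : ∃ e, FreeLabel t a b.conv (L p v) (L q v) e := by
    refine exists_freeLabel t (fun i hy => mt RbAtom.conv_eq_green_iff.1 (horient i hy))
      fun hav hbv => ?_
    exact hwitness ⟨v, hav.symm, by rw [hL.label_conv q v, ← hbv, RbAtom.conv_conv]⟩
  choose E₀ hE₀ using hfree
  let E := Function.update (Function.update E₀ p a) q b.conv
  have hEq : E q = b.conv := Function.update_self ..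
  have hEp : E p = a := by
    rcases eq_or_ne p q with rfl | hpq
    · rw [hL.label_self, forbidden_id_right_iff, not_not] at hab
      rw [hEq, hab, RbAtom.conv_conv]
    · simp only [E, Function.update_of_ne hpq, Function.update_self]
  refine ⟨E, ⟨?_, ?_, ?_, ?_, fun v hp hq => ?_⟩, hEp, hEq⟩
  · rwa [hEp]
  · rwa [hEq, ne_eq, RbAtom.conv_eq_id_iff]
  · rwa [hEp, hEq, RbAtom.conv_conv]
  · simpa only [hEp, hEq, ne_eq, RbAtom.conv_eq_green_iff] using horient
  · simpa only [E, hEp, hEq, Function.update_of_ne hq, Function.update_of_ne hp] using hE₀ v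

theorem IsGuidedNetwork.exists_option_of_orient (hL : IsGuidedNetwork L τ)
    (h : PairHomsExtend G H) (ha : a ≠ .id) (hb : b ≠ .id) (hab : ¬ Forbidden G H a b (L p q))
    (hwitness : ¬ ∃ w, L p w = a ∧ L w q = b) (horient : ∀ i, a = .yellow → b ≠ .green i) :
    ∃ (L' : Option X → Option X → RbAtom G.V H.V) (τ' : Option X → Option X → Guide G H),
      IsGuidedNetwork L' τ' ∧ (∀ u v, L' (some u) (some v) = L u v) ∧
      (∀ u v, τ' (some u) (some v) = τ u v) ∧ L' (some p) none = a ∧ L' none (some q) = b := by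
  obtain ⟨E, hE, rfl, hq⟩ :=
    hL.exists_isFreeExtension (τ p q) ha hb hab hwitness horient
  obtain ⟨τ', hτ', hττ'⟩ := hE.exists_isGuidedNetwork h hL
  refine ⟨_, τ', hτ', fun _ _ => rfl, hττ', rfl, ?_⟩
  rw [adjoinLabel, adjoinPoint, hq, RbAtom.conv_conv]

theorem IsGuidedNetwork.exists_option (hL : IsGuidedNetwork L τ) (h : PairHomsExtend G H)
    (hab : ¬ Forbidden G H a b (L p q)) (hwitness : ¬ ∃ w, L p w = a ∧ L w q = b) :
    ∃ (L' : Option X → Option X → RbAtom G.V H.V) (τ' : Option X → Option X → Guide G H),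
      IsGuidedNetwork L' τ' ∧ (∀ u v, L' (some u) (some v) = L u v) ∧
      (∀ u v, τ' (some u) (some v) = τ u v) ∧ L' (some p) none = a ∧ L' none (some q) = b := by
  have ha : a ≠ .id := by
    rintro rfl
    rw [forbidden_id_left_iff, not_not] at hab
    exact hwitness ⟨p, hL.label_self p, hab.symm⟩
  have hb : b ≠ .id := by
    rintro rfl
    rw [forbidden_id_mid_iff, not_not] at hab
    exact hwitness ⟨q, hab.symm, hL.label_self q⟩
  by_cases horient : ∀ i, a = .yellow → b ≠ .green i
  · exact hL.exists_option_of_orient h ha hb hab hwitness horient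
  push Not at horient
  obtain ⟨i, rfl, rfl⟩ := horient
  -- Both labels are self-converse, so the roles of `p` and `q` can be exchanged.
  obtain ⟨L', τ', hL', hLL', hττ', hq, hp⟩ :=
    hL.exists_option_of_orient (p := q) (q := p) (a := .green i) (b := .yellow) h hb ha
      (mt (hL.forbidden_conv_label_comm (a := .green i) (b := .yellow)).1 hab)
      (by
        rintro ⟨w, hqw, hwp⟩
        exact hwitness ⟨w, by simp [hL.label_conv w p, hwp], by simp [hL.label_conv q w, hqw]⟩)
      (by simp)
  exact ⟨L', τ', hL', hLL', hττ', by simp [hL'.label_conv none, hp],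
    by simp [hL'.label_conv (some q), hq]⟩

end Defects

section Limit

variable {G H : BinStruct σ}

theorem isGuidedNetwork_of_subsingleton {X : Type} [Subsingleton X] (τ : X → X → Guide G H) :
    IsGuidedNetwork (fun _ _ => .id) τ where
  label_self _ := rfl
  eq_of_label_eq_id _ := Subsingleton.elim _ _
  label_conv _ _ := rfl
  consistent _ _ _ := by simp
  isConeGuide _ _ _ _ u v _ _ huv := absurd (Subsingleton.elim u v) huv

theorem isGuidedNetwork_of_forall_finite {X : Type} {L : X → X → RbAtom G.V H.V}
    {τ : X → X → Guide G H} (h : ∀ s : Set X, s.Finite → ∃ (Y : Type) (f : Y → X),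
      s ⊆ Set.range f ∧ IsGuidedNetwork (fun u v => L (f u) (f v)) fun u v => τ (f u) (f v)) :
    IsGuidedNetwork L τ := by
  have local_cover (x y u v : X) : ∃ (Y : Type) (f : Y → X),
      (∃ x', f x' = x) ∧ (∃ y', f y' = y) ∧ (∃ u', f u' = u) ∧ (∃ v', f v' = v) ∧
        IsGuidedNetwork (fun u v => L (f u) (f v)) fun u v => τ (f u) (f v) := by
    obtain ⟨Y, f, hs, hf⟩ := h {x, y, u, v} (Set.toFinite _)
    exact ⟨Y, f, hs (by simp), hs (by simp), hs (by simp), hs (by simp), hf⟩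
  refine ⟨⟨fun u => ?_, fun {u v} huv => ?_, fun u v => ?_, fun u w v => ?_⟩,
    fun x y i i' u v hu hv huv => ?_⟩
  · obtain ⟨Y, f, ⟨u, rfl⟩, -, -, -, hf⟩ := local_cover u u u u
    exact hf.label_self u
  · obtain ⟨Y, f, ⟨u, rfl⟩, ⟨v, rfl⟩, -, -, hf⟩ := local_cover u v v v
    exact congrArg f (hf.eq_of_label_eq_id huv)
  · obtain ⟨Y, f, ⟨u, rfl⟩, ⟨v, rfl⟩, -, -, hf⟩ := local_cover u v v v
    exact hf.label_conv u v
  · obtain ⟨Y, f, ⟨u, rfl⟩, ⟨w, rfl⟩, ⟨v, rfl⟩, -, hf⟩ := local_cover u w v v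
    exact hf.consistent u w v
  · obtain ⟨Y, f, ⟨x, rfl⟩, ⟨y, rfl⟩, ⟨u, rfl⟩, ⟨v, rfl⟩, hf⟩ := local_cover x y u v
    exact hf.isConeGuide x y i i' u v hu hv fun h => huv (congrArg f h)

theorem exists_glue {ι α β : Type*} [Nonempty β] {c : Set ι} {D : ι → Set α} {f : ι → α → α → β}
    (hf : ∀ i ∈ c, ∀ j ∈ c, ∀ u v, u ∈ D i → v ∈ D i → u ∈ D j → v ∈ D j → f i u v = f j u v) :
    ∃ g : α → α → β, ∀ i ∈ c, ∀ u ∈ D i, ∀ v ∈ D i, g u v = f i u v := by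
  have (u v : α) : ∃ b, ∀ i ∈ c, u ∈ D i → v ∈ D i → b = f i u v := by
    by_cases h : ∃ i ∈ c, u ∈ D i ∧ v ∈ D i
    · obtain ⟨i, hi, hu, hv⟩ := h
      exact ⟨f i u v, fun j hj hu' hv' => hf i hi j hj u v hu hv hu' hv'⟩
    · obtain ⟨b⟩ := ‹Nonempty β›
      exact ⟨b, fun i hi hu hv => absurd ⟨i, hi, hu, hv⟩ h⟩
  choose g hg using this
  exact ⟨g, fun i hi u hu v hv => hg u v i hi hu hv⟩

/-- Names for the points of a network grown from a single point: `node p q a b` is reserved for a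
witness of `a ; b` on the edge `(p, q)`. -/
inductive PointName (A : Type) : Type
  | root
  | node (p q : PointName A) (a b : A)

/-- A guided network on a set of named points, each of which has the property its name announces.
The values of `label` and `guide` outside `domain` are irrelevant. -/
structure NamedNetwork (G H : BinStruct σ) where
  domain : Set (PointName (RbAtom G.V H.V))
  label : PointName (RbAtom G.V H.V) → PointName (RbAtom G.V H.V) → RbAtom G.V H.V
  guide : PointName (RbAtom G.V H.V) → PointName (RbAtom G.V H.V) → Guide G H
  isGuidedNetwork :
    IsGuidedNetwork (fun u v : domain => label u v) fun u v : domain => guide u v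
  root_mem : .root ∈ domain
  witness : ∀ {p q a b}, .node p q a b ∈ domain →
    p ∈ domain ∧ q ∈ domain ∧ label p (.node p q a b) = a ∧ label (.node p q a b) q = b

namespace NamedNetwork

/-- Networks are ordered by extension. -/
instance : Preorder (NamedNetwork G H) where
  le N M := N.domain ⊆ M.domain ∧ ∀ u ∈ N.domain, ∀ v ∈ N.domain,
    M.label u v = N.label u v ∧ M.guide u v = N.guide u v
  le_refl N := ⟨subset_rfl, fun _ _ _ _ => ⟨rfl, rfl⟩⟩
  le_trans N M K hNM hMK := ⟨hNM.1.trans hMK.1, fun u hu v hv => by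
    obtain ⟨hl, hg⟩ := hNM.2 u hu v hv
    obtain ⟨hl', hg'⟩ := hMK.2 u (hNM.1 hu) v (hNM.1 hv)
    exact ⟨hl'.trans hl, hg'.trans hg⟩⟩

theorem nonempty (h : PairHomsExtend G H) : Nonempty (NamedNetwork G H) := by
  obtain ⟨t⟩ := h.nonempty_guide
  exact ⟨{
    domain := {.root}
    label _ _ := .id
    guide _ _ := t
    isGuidedNetwork := isGuidedNetwork_of_subsingleton _
    root_mem := rfl
    witness := nofun }⟩

theorem eq_of_mem_domain_of_isChain {c : Set (NamedNetwork G H)} (hc : IsChain (· ≤ ·) c)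
    {N M : NamedNetwork G H} (hN : N ∈ c) (hM : M ∈ c) {u v : PointName (RbAtom G.V H.V)}
    (hu : u ∈ N.domain) (hv : v ∈ N.domain) (hu' : u ∈ M.domain) (hv' : v ∈ M.domain) :
    N.label u v = M.label u v ∧ N.guide u v = M.guide u v := by
  rcases hc.total hN hM with h | h
  · exact (h.2 u hu v hv).imp Eq.symm Eq.symm
  · exact h.2 u hu' v hv'

theorem exists_subset_domain_of_isChain {c : Set (NamedNetwork G H)} (hc : IsChain (· ≤ ·) c)
    (hne : c.Nonempty) {s : Set (PointName (RbAtom G.V H.V))} (hs : s.Finite)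
    (hsc : s ⊆ ⋃ N ∈ c, N.domain) : ∃ N ∈ c, s ⊆ N.domain := by
  have hdir : DirectedOn (fun N M : NamedNetwork G H => N.domain ⊆ M.domain) c :=
    hc.directedOn.mono fun _ _ h => h.1
  lift s to Finset (PointName (RbAtom G.V H.V)) using hs
  exact DirectedOn.exists_mem_subset_of_finset_subset_biUnion hne hdir hsc

theorem bddAbove_of_isChain {c : Set (NamedNetwork G H)} (hc : IsChain (· ≤ ·) c)
    (hne : c.Nonempty) : BddAbove c := by
  have ⟨N₀, hN₀⟩ := hne
  have : Nonempty (RbAtom G.V H.V) := ⟨.id⟩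
  have : Nonempty (Guide G H) := ⟨N₀.guide .root .root⟩
  obtain ⟨label, hlabel⟩ := exists_glue fun N hN M hM _ _ hu hv hu' hv' =>
    (eq_of_mem_domain_of_isChain hc hN hM hu hv hu' hv').1
  obtain ⟨guide, hguide⟩ := exists_glue fun N hN M hM _ _ hu hv hu' hv' =>
    (eq_of_mem_domain_of_isChain hc hN hM hu hv hu' hv').2
  refine ⟨{
    domain := ⋃ N ∈ c, N.domain
    label := label
    guide := guide
    isGuidedNetwork := isGuidedNetwork_of_forall_finite fun s hs => ?_
    root_mem := Set.mem_biUnion hN₀ N₀.root_mem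
    witness := fun {p q a b} hmem => ?_ }, fun N hN => ⟨Set.subset_biUnion_of_mem hN,
      fun u hu v hv => ⟨hlabel N hN u hu v hv, hguide N hN u hu v hv⟩⟩⟩
  · obtain ⟨N, hN, hsN⟩ := exists_subset_domain_of_isChain hc hne (hs.image Subtype.val)
      (Subtype.coe_image_subset _ s)
    refine ⟨N.domain, Set.inclusion (Set.subset_biUnion_of_mem hN), fun u hu => ?_, ?_⟩
    · exact ⟨⟨u, hsN ⟨u, hu, rfl⟩⟩, rfl⟩
    · convert N.isGuidedNetwork using 3 with u v u v
      · exact hlabel N hN u u.2 v v.2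
      · exact hguide N hN u u.2 v v.2
  · obtain ⟨N, hN, hmemN⟩ := Set.mem_iUnion₂.1 hmem
    obtain ⟨hp, hq, ha, hb⟩ := N.witness hmemN
    exact ⟨Set.mem_biUnion hN hp, Set.mem_biUnion hN hq, (hlabel N hN _ hp _ hmemN).trans ha,
      (hlabel N hN _ hmemN _ hq).trans hb⟩

theorem exists_ge_node_mem (h : PairHomsExtend G H) (N : NamedNetwork G H) {p q : N.domain}
    {a b : RbAtom G.V H.V} (hab : ¬ Forbidden G H a b (N.label p q))
    (hwitness : ¬ ∃ w : N.domain, N.label p w = a ∧ N.label w q = b) :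
    ∃ M, N ≤ M ∧ .node p q a b ∈ M.domain := by
  classical
  obtain ⟨L, τ, hL, hNL, hNτ, ha, hb⟩ := N.isGuidedNetwork.exists_option h hab hwitness
  have hnew : .node p q a b ∉ N.domain := fun hmem =>
    hwitness ⟨⟨_, hmem⟩, (N.witness hmem).2.2⟩
  let g (u : PointName (RbAtom G.V H.V)) : Option N.domain :=
    if hu : u ∈ N.domain then some ⟨u, hu⟩ else none
  have g_of_mem {u} (hu : u ∈ N.domain) : g u = some ⟨u, hu⟩ := dif_pos hu
  have g_node : g (.node p q a b) = none := dif_neg hnew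
  have g_injective : (fun u : ↥(insert (.node p q a b) N.domain) => g u).Injective := by
    rintro ⟨u, rfl | hu⟩ ⟨v, rfl | hv⟩ <;> simp_all
  refine ⟨{
    domain := insert (.node p q a b) N.domain
    label := fun u v => L (g u) (g v)
    guide := fun u v => τ (g u) (g v)
    isGuidedNetwork := hL.comp g_injective
    root_mem := .inr N.root_mem
    witness := ?_ }, ⟨Set.subset_insert _ _, fun u hu v hv => ?_⟩, Set.mem_insert _ _⟩
  · rintro p' q' a' b' (hnode | hmem)
    · cases hnode
      simp only [g_node, g_of_mem p.2, g_of_mem q.2, ha, hb]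
      exact ⟨.inr p.2, .inr q.2, trivial, trivial⟩
    · obtain ⟨hp, hq, ha', hb'⟩ := N.witness hmem
      simp only [g_of_mem hmem, g_of_mem hp, g_of_mem hq, hNL]
      exact ⟨.inr hp, .inr hq, ha', hb'⟩
  · simp only [g_of_mem hu, g_of_mem hv, hNL, hNτ, and_self]

theorem isSaturated_of_isMax (h : PairHomsExtend G H) {N : NamedNetwork G H} (hN : IsMax N) :
    IsSaturated G H fun u v : N.domain => N.label u v := by
  intro p q a b hab
  by_contra hwitness
  obtain ⟨M, hNM, hmem⟩ := N.exists_ge_node_mem h hab hwitness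
  have hmemN := (hN hNM).1 hmem
  exact hwitness ⟨⟨_, hmemN⟩, (N.witness hmemN).2.2⟩

end NamedNetwork

theorem PairHomsExtend.exists_isNetwork (h : PairHomsExtend G H) :
    ∃ (X : Type) (L : X → X → RbAtom G.V H.V), Nonempty X ∧ IsNetwork G H L ∧
      IsSaturated G H L := by
  have := NamedNetwork.nonempty h
  obtain ⟨N, hN⟩ := zorn_le_nonempty (α := NamedNetwork G H) fun _ hc hne =>
    NamedNetwork.bddAbove_of_isChain hc hne
  exact ⟨_, _, ⟨_, N.root_mem⟩, N.isGuidedNetwork.toIsNetwork,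
    NamedNetwork.isSaturated_of_isMax h hN⟩

end Limit

theorem rainbow_completelyRepresentable_iff {σ : Type} (G H : BinStruct σ) :
    ((∀ i i' : G.V, i ≠ i' → ∃ j j' : H.V, PartialHom2 G H i i' j j') ∧
      (∀ (i i' : G.V) (j j' : H.V), i ≠ i' → PartialHom2 G H i i' j j' →
        ∃ f : G.V → H.V, IsHom G H f ∧ f i = j ∧ f i' = j')) ↔
    CompletelyRepresentable G H := by
  rw [completelyRepresentable_iff_exists_isNetwork]
  constructor
  · rintro ⟨hpair, hextend⟩
    exact PairHomsExtend.exists_isNetwork ⟨hpair _ _, hextend _ _ _ _⟩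
  · rintro ⟨X, L, _, hL, hs⟩
    have h := hs.pairHomsExtend hL
    exact ⟨fun _ _ => h.exists_partialHom2, fun _ _ _ _ => h.exists_isHom⟩
end

section
/- Let G, H, F be binary structures, let c < ω, and let (α,β) be a position arrived at in the pebble game Γ^c_n(B_{G,F}, B_{H,F}) during which ∃ plays using the mirroring strategy induced by a winning strategy in the parallel colouring game G^{c+3}_ω(G,H). Then for every relation-algebra term t whose variables are indexed by the common domain of α and β, the sets of non-green atoms below t^α (in B_{G,F}) and below t^β (in B_{H,F}) are identical. -/
variable {σ : Type}

/-
Composition in a rainbow algebra inspects a triple of atoms, and whether that triple is forbidden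
depends on its green subscripts only up to partial isomorphism. Beyond the colours that record the
pebbles, the colouring game has three spare ones, so `∃` can give each green subscript of a triple
a colour of its own. She must answer a singleton by a singleton, and as the position is not lost,
vertices which are alone in wearing the same colour form a partial isomorphism between `G` and `H`
that respects the pebble colours. By induction on the term, its two values then agree on all pairs
of atoms matched by any such partial isomorphism, in particular on the non-green atoms.
-/

/-! ### Logical relations between algebras of relation-algebra type -/

/-- A relation between the carriers of two algebras of relation-algebra type that is preserved by
all the operations. -/
structure RAOps.IsLogicalRelation {A B : Type} (opsA : RAOps A) (opsB : RAOps B)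
    (R : A → B → Prop) : Prop where
  bot : R opsA.bot opsB.bot
  top : R opsA.top opsB.top
  one' : R opsA.one' opsB.one'
  sup ⦃a b a' b'⦄ : R a b → R a' b' → R (opsA.sup a a') (opsB.sup b b')
  inf ⦃a b a' b'⦄ : R a b → R a' b' → R (opsA.inf a a') (opsB.inf b b')
  compl ⦃a b⦄ : R a b → R (opsA.compl a) (opsB.compl b)
  comp ⦃a b a' b'⦄ : R a b → R a' b' → R (opsA.comp a a') (opsB.comp b b')
  conv ⦃a b⦄ : R a b → R (opsA.conv a) (opsB.conv b)

theorem RAOps.IsLogicalRelation.evalo {A B : Type} {opsA : RAOps A} {opsB : RAOps B}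
    {R : A → B → Prop} (hR : opsA.IsLogicalRelation opsB R) {c : ℕ}
    {α : Fin c → Option A} {β : Fin c → Option B}
    (hvar : ∀ i a b, α i = some a → β i = some b → R a b) (t : RATerm c) {a : A} {b : B}
    (ha : t.evalo opsA α = some a) (hb : t.evalo opsB β = some b) : R a b := by
  induction t generalizing a b with
  | var i => exact hvar i a b ha hb
  | bot => cases ha; cases hb; exact hR.bot
  | top => cases ha; cases hb; exact hR.top
  | one' => cases ha; cases hb; exact hR.one'
  | sup s t ihs iht | inf s t ihs iht | comp s t ihs iht =>
    simp only [RATerm.evalo, Option.bind_eq_some_iff, Option.map_eq_some_iff] at ha hb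
    obtain ⟨a₁, ha₁, a₂, ha₂, rfl⟩ := ha
    obtain ⟨b₁, hb₁, b₂, hb₂, rfl⟩ := hb
    first
    | exact hR.sup (ihs ha₁ hb₁) (iht ha₂ hb₂)
    | exact hR.inf (ihs ha₁ hb₁) (iht ha₂ hb₂)
    | exact hR.comp (ihs ha₁ hb₁) (iht ha₂ hb₂)
  | compl t iht | conv t iht =>
    simp only [RATerm.evalo, Option.map_eq_some_iff] at ha hb
    obtain ⟨a₁, ha₁, rfl⟩ := ha
    obtain ⟨b₁, hb₁, rfl⟩ := hb
    first
    | exact hR.compl (iht ha₁ hb₁)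
    | exact hR.conv (iht ha₁ hb₁)

/-! ### Atoms with related green subscripts -/

namespace RbAtom

variable {V W F : Type}

/-- The lifting of a relation between green subscripts to rainbow atoms: non-green atoms are
related to themselves only, green atoms are related when their subscripts are. -/
inductive Rel (r : V → W → Prop) : RbAtom V F → RbAtom W F → Prop
  | id : Rel r .id .id
  | black : Rel r .black .black
  | white : Rel r .white .white
  | yellow : Rel r .yellow .yellow
  | green {x : V} {y : W} : r x y → Rel r (.green x) (.green y)
  | red (j j' : F) : Rel r (.red j j') (.red j j')

theorem conv_conv_s5 (a : RbAtom V F) : a.conv.conv = a := by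
  cases a <;> rfl

namespace Rel

variable {r s : V → W → Prop} {a : RbAtom V F} {b : RbAtom W F}

theorem mono (hrs : ∀ x y, r x y → s x y) (h : Rel r a b) : Rel s a b := by
  cases h <;> constructor
  exact hrs _ _ ‹_›

theorem flip (h : Rel r a b) : Rel (flip r) b a := by
  cases h <;> constructor
  assumption

theorem conv (h : Rel r a b) : Rel r a.conv b.conv := by
  cases h <;> constructor
  assumption

theorem leftUnique (hr : Relator.LeftUnique r) :
    Relator.LeftUnique (Rel r : RbAtom V F → RbAtom W F → Prop) := by
  intro a b c hac hbc
  cases hac with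
  | green hx => cases hbc with | green hy => exact congrArg RbAtom.green (hr hx hy)
  | _ => cases hbc; rfl

theorem exists_of_exists {ι : Type*} [Nonempty ι] {r : ι → V → W → Prop}
    (h : Rel (fun x y => ∃ i, r i x y) a b) : ∃ i, Rel (r i) a b := by
  have i₀ := Classical.arbitrary ι
  cases h with
  | green hxy => exact hxy.imp fun _ => .green
  | _ => exact ⟨i₀, by constructor⟩

end Rel

end RbAtom

/-- Elements of two rainbow algebras that contain the same atoms, after translating green subscripts
along `r`. -/
def AgreeAlong {V W F : Type} (r : V → W → Prop) (X : Set (RbAtom V F)) (Y : Set (RbAtom W F)) :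
    Prop :=
  ∀ ⦃a b⦄, RbAtom.Rel r a b → (a ∈ X ↔ b ∈ Y)

section AgreeAlong

variable {V W F : Type} {r s : V → W → Prop} {X : Set (RbAtom V F)} {Y : Set (RbAtom W F)}

theorem AgreeAlong.mono (hrs : ∀ x y, r x y → s x y) (h : AgreeAlong s X Y) : AgreeAlong r X Y :=
  fun _ _ hab => h (hab.mono hrs)

theorem AgreeAlong.flip (h : AgreeAlong r X Y) : AgreeAlong (flip r) Y X :=
  fun _ _ hab => (h hab.flip).symm

theorem agreeAlong_mirrorElt (X : Set (RbAtom V F)) (T : Set W) :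
    AgreeAlong (fun x y => x ∈ greenPart X ↔ y ∈ T) X (mirrorElt X T) := by
  rintro a b (_ | _ | _ | _ | hxy | _)
  case green => exact hxy
  all_goals exact Iff.rfl

end AgreeAlong

/-! ### Forbidden triples and partial isomorphisms -/

/-- The relation `p` is a partial isomorphism of binary structures: a one-to-one correspondence
preserving and reflecting all predicates. -/
structure IsPartialIso (G H : BinStruct σ) (p : G.V → H.V → Prop) : Prop where
  biUnique : Relator.BiUnique p
  rel_iff ⦃x y x' y'⦄ : p x y → p x' y' → ∀ b, G.rel b x x' ↔ H.rel b y y'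

section Forbidden

variable {G H F : BinStruct σ} {p : G.V → H.V → Prop}

theorem IsPartialIso.flip (hp : IsPartialIso G H p) : IsPartialIso H G (flip p) where
  biUnique := ⟨fun _ _ _ h h' => hp.biUnique.2 h h', fun _ _ _ h h' => hp.biUnique.1 h h'⟩
  rel_iff _ _ _ _ h h' b := (hp.rel_iff h h' b).symm

theorem IsPartialIso.partialHom2_iff (hp : IsPartialIso G H p) {x x' : G.V} {y y' : H.V}
    (hxy : p x y) (hxy' : p x' y') (j j' : F.V) :
    PartialHom2 G F x x' j j' ↔ PartialHom2 H F y y' j j' :=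
  forall_congr' fun b => by rw [hp.rel_iff hxy hxy', hp.rel_iff hxy' hxy]

variable {a b c : RbAtom G.V F.V} {a' b' c' : RbAtom H.V F.V}

theorem BaseForbidden.map (h : BaseForbidden G F a b c) (hp : IsPartialIso G H p)
    (ha : RbAtom.Rel p a a') (hb : RbAtom.Rel p b b') (hc : RbAtom.Rel p c c') :
    BaseForbidden H F a' b' c' := by
  cases h with
  | ident _ _ hne =>
    cases ha
    refine .ident _ _ fun h => hne ?_
    subst h
    exact RbAtom.Rel.leftUnique hp.biUnique.1 hb hc
  | ggr x x' j j' hn =>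
    rcases ha with _ | _ | _ | _ | hx
    rcases hb with _ | _ | _ | _ | hx'
    cases hc
    refine .ggr _ _ _ _ fun ⟨hne, hhom⟩ => hn ⟨?_, (hp.partialHom2_iff hx hx' j j').2 hhom⟩
    rintro rfl
    exact hne (hp.biUnique.2 hx hx')
  | rrr _ _ _ _ _ _ hn => cases ha; cases hb; cases hc; exact .rrr _ _ _ _ _ _ hn
  | _ => cases ha; cases hb; cases hc; constructor

theorem forbidden_iff : Forbidden G F a b c ↔
    BaseForbidden G F a b c ∨ BaseForbidden G F a.conv c b ∨ BaseForbidden G F c b.conv a ∨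
    BaseForbidden G F b.conv a.conv c.conv ∨ BaseForbidden G F c.conv a b.conv ∨
    BaseForbidden G F b c.conv a.conv := by
  constructor
  · rintro ⟨x, y, z, h, e | e | e | e | e | e⟩ <;> cases e <;>
      simp only [RbAtom.conv_conv_s5, h, true_or, or_true]
  · rintro (h | h | h | h | h | h) <;> exact ⟨_, _, _, h, by simp [RbAtom.conv_conv_s5]⟩

theorem Forbidden.map (h : Forbidden G F a b c) (hp : IsPartialIso G H p)
    (ha : RbAtom.Rel p a a') (hb : RbAtom.Rel p b b') (hc : RbAtom.Rel p c c') :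
    Forbidden H F a' b' c' := by
  rw [forbidden_iff] at h ⊢
  exact h.imp (·.map hp ha hb hc) <| .imp (·.map hp ha.conv hc hb) <|
    .imp (·.map hp hc hb.conv ha) <| .imp (·.map hp hb.conv ha.conv hc.conv) <|
    .imp (·.map hp hc.conv ha hb.conv) (·.map hp hb hc.conv ha.conv)

end Forbidden

/-! ### Positions of the colouring game that are not lost -/

section Palette

variable {V W : Type} {k : ℕ}

/-- The palette of `x`, that is, the set of all colours that `x` wears under the colouring `g`. -/
def palette (g : Fin k → Set V) (x : V) : Set (Fin k) := {t | x ∈ g t}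

/-- `x` and `y` are the only vertices wearing the colour `m` in the position `(g, h)`. -/
def PinnedAt (g : Fin k → Set V) (h : Fin k → Set W) (m : Fin k) (x : V) (y : W) : Prop :=
  g m = {x} ∧ h m = {y}

/-- `x` and `y` are the only vertices wearing some common colour in the position `(g, h)`. -/
def Pinned (g : Fin k → Set V) (h : Fin k → Set W) (x : V) (y : W) : Prop :=
  ∃ m, PinnedAt g h m x y

variable {g : Fin k → Set V} {h : Fin k → Set W}

theorem mem_palette {t : Fin k} {x : V} : t ∈ palette g x ↔ x ∈ g t := Iff.rfl

theorem mem_paletteSet {x : V} {π : Set (Fin k)} : x ∈ PaletteSet g π ↔ palette g x = π :=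
  Set.ext_iff.symm

theorem Pinned.symm {x : V} {y : W} : Pinned g h x y → Pinned h g y x :=
  Exists.imp fun _ => And.symm

theorem Pinned.eq_of_palette_eq {x : V} {y z : W} (hxy : Pinned g h x y)
    (hz : palette h z = palette g x) : z = y := by
  obtain ⟨m, hgm, hhm⟩ := hxy
  have hm : m ∈ palette g x := hgm.ge rfl
  exact hhm.le (mem_palette.1 (hz ▸ hm))

end Palette

section ColWin

variable {G H : BinStruct σ} {k : ℕ} {g : Fin k → Set G.V} {h : Fin k → Set H.V}

theorem ColWin.symm : ColWin G H k g h → ColWin H G k h g :=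
  Or.imp (fun ⟨π, hπ⟩ => ⟨π, hπ.symm⟩) fun ⟨π, π', b, hπ⟩ => ⟨π, π', b, hπ.symm⟩

theorem exists_palette_eq (hw : ¬ ColWin G H k g h) (x : G.V) :
    ∃ y, palette h y = palette g x := by
  contrapose! hw
  refine .inl ⟨palette g x, .inr ⟨Set.eq_empty_of_forall_notMem fun y hy => ?_, ?_⟩⟩
  · exact hw y (mem_paletteSet.1 hy)
  · exact Set.Nonempty.ne_empty ⟨x, mem_paletteSet.2 rfl⟩

theorem exists_rel_palette_eq (hw : ¬ ColWin G H k g h) {b : σ} {x x' : G.V}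
    (hx : G.rel b x x') :
    ∃ y y', palette h y = palette g x ∧ palette h y' = palette g x' ∧ H.rel b y y' := by
  contrapose! hw
  refine .inr ⟨palette g x, palette g x', b, .inr
    ⟨Set.eq_empty_of_forall_notMem ?_, Set.Nonempty.ne_empty ⟨(x, x'), ?_⟩⟩⟩
  · rintro ⟨y, y'⟩ ⟨⟨hy, hy'⟩, hr⟩
    exact hw y y' (mem_paletteSet.1 hy) (mem_paletteSet.1 hy') hr
  · exact ⟨⟨mem_paletteSet.2 rfl, mem_paletteSet.2 rfl⟩, hx⟩

theorem palette_eq_of_eq_singleton (hw : ¬ ColWin G H k g h) {m : Fin k} {x : G.V}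
    (hgm : g m = {x}) {y : H.V} (hy : y ∈ h m) : palette h y = palette g x := by
  obtain ⟨z, hz⟩ := exists_palette_eq (mt .symm hw) y
  have hm : m ∈ palette h y := hy
  have hzx : z = x := hgm.le (mem_palette.1 (hz ▸ hm))
  rw [← hz, hzx]

theorem Pinned.palette_eq (hw : ¬ ColWin G H k g h) {x : G.V} {y : H.V} (hxy : Pinned g h x y) :
    palette h y = palette g x :=
  have ⟨_, hgm, hhm⟩ := hxy
  palette_eq_of_eq_singleton hw hgm (hhm.ge rfl)

theorem rightUnique_pinned (hw : ¬ ColWin G H k g h) : Relator.RightUnique (Pinned g h) :=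
  fun _ _ _ hxy hxy' => hxy'.eq_of_palette_eq (hxy.palette_eq hw)

theorem Pinned.rel (hw : ¬ ColWin G H k g h) {x x' : G.V} {y y' : H.V} (hxy : Pinned g h x y)
    (hxy' : Pinned g h x' y') {b : σ} (hx : G.rel b x x') : H.rel b y y' := by
  obtain ⟨z, z', hz, hz', hr⟩ := exists_rel_palette_eq hw hx
  rwa [hxy.eq_of_palette_eq hz, hxy'.eq_of_palette_eq hz'] at hr

theorem isPartialIso_pinned (hw : ¬ ColWin G H k g h) : IsPartialIso G H (Pinned g h) where
  biUnique := ⟨fun _ _ _ hxy hxy' => rightUnique_pinned (mt .symm hw) hxy.symm hxy'.symm,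
    rightUnique_pinned hw⟩
  rel_iff _ _ _ _ hxy hxy' _ := ⟨hxy.rel hw hxy', hxy.symm.rel (mt .symm hw) hxy'.symm⟩

end ColWin

/-! ### Continuing the colouring game -/

/-- The position `(g, h)` belongs to the family `Inv`, and all colours in `C` are as they were in
the position `(g₀, h₀)`. For an invariant `Inv` of a winning strategy of `∃` this records what a
play that only moves colours outside `C` leaves unchanged. -/
structure IsContinuation {V W : Type} {k : ℕ} (Inv : (Fin k → Set V) → (Fin k → Set W) → Prop)
    (C : Set (Fin k)) (g₀ : Fin k → Set V) (h₀ : Fin k → Set W) (g : Fin k → Set V)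
    (h : Fin k → Set W) : Prop where
  mem : Inv g h
  left : Set.EqOn g g₀ C
  right : Set.EqOn h h₀ C

namespace IsContinuation

variable {V W : Type} {k : ℕ} {Inv : (Fin k → Set V) → (Fin k → Set W) → Prop}
  {C D : Set (Fin k)} {g₀ g g' : Fin k → Set V} {h₀ h h' : Fin k → Set W}

theorem refl (hgh : Inv g h) : IsContinuation Inv C g h g h :=
  ⟨hgh, Set.eqOn_refl _ _, Set.eqOn_refl _ _⟩

theorem flip (hcont : IsContinuation Inv C g₀ h₀ g h) :
    IsContinuation (flip Inv) C h₀ g₀ h g :=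
  ⟨hcont.mem, hcont.right, hcont.left⟩

theorem trans (hcont : IsContinuation Inv C g₀ h₀ g h) (hcont' : IsContinuation Inv D g h g' h')
    (hCD : C ⊆ D) : IsContinuation Inv C g₀ h₀ g' h' :=
  ⟨hcont'.mem, (hcont'.left.mono hCD).trans hcont.left,
    (hcont'.right.mono hCD).trans hcont.right⟩

theorem update {m : Fin k} {S : Set V} {T : Set W}
    (hST : Inv (Function.update g m S) (Function.update h m T)) :
    IsContinuation Inv {m}ᶜ g h (Function.update g m S) (Function.update h m T) :=
  ⟨hST, fun _ hn => Function.update_of_ne hn _ _, fun _ hn => Function.update_of_ne hn _ _⟩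

theorem pinnedAt (hcont : IsContinuation Inv C g₀ h₀ g h) {m : Fin k} (hm : m ∈ C) {x : V} {y : W}
    (hxy : PinnedAt g₀ h₀ m x y) : PinnedAt g h m x y :=
  ⟨(hcont.left hm).trans hxy.1, (hcont.right hm).trans hxy.2⟩

end IsContinuation

section Continuation

variable {G H : BinStruct σ} {k : ℕ} {Inv : (Fin k → Set G.V) → (Fin k → Set H.V) → Prop}

theorem IsColInvariant.flip (hI : IsColInvariant G H k Inv) : IsColInvariant H G k (flip Inv) :=
  have ⟨init, safe, forth, back⟩ := hI
  ⟨init, fun h g hgh hw => safe g h hgh hw.symm, fun h g => back g h, fun h g => forth g h⟩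

theorem IsColInvariant.subsingleton_of_eq_singleton [Nontrivial (Fin k)]
    (hI : IsColInvariant G H k Inv) {g : Fin k → Set G.V} {h : Fin k → Set H.V} (hgh : Inv g h)
    {m : Fin k} {x : G.V} (hgm : g m = {x}) : (h m).Subsingleton := by
  intro y hy z hz
  -- `∀` can tell `y` from `z` by giving another colour to `y` alone.
  obtain ⟨n, hn⟩ := exists_ne m
  obtain ⟨S, hS⟩ := hI.2.2.2 g h hgh n {y}
  set h' := Function.update h n {y} with hh'
  have hg'm : Function.update g n S m = {x} := by rwa [Function.update_of_ne hn.symm]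
  have hh'm : h' m = h m := Function.update_of_ne hn.symm ..
  have hpal {u : H.V} (hu : u ∈ h m) : palette h' u = palette (Function.update g n S) x :=
    palette_eq_of_eq_singleton (hI.2.1 _ _ hS) hg'm (hh'm ▸ hu)
  have hny : n ∈ palette h' y := by simp [mem_palette, hh']
  have hnz : n ∈ palette h' z := by rwa [hpal hz, ← hpal hy]
  have hzy : z = y := by simpa [mem_palette, hh'] using hnz
  exact hzy.symm

theorem IsColInvariant.exists_singleton_response [Nontrivial (Fin k)]
    (hI : IsColInvariant G H k Inv) {g : Fin k → Set G.V} {h : Fin k → Set H.V} (hgh : Inv g h)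
    (m : Fin k) (x : G.V) : ∃ y, Inv (Function.update g m {x}) (Function.update h m {y}) := by
  obtain ⟨T, hT⟩ := hI.2.2.1 g h hgh m {x}
  obtain ⟨y, hy⟩ := exists_palette_eq (hI.2.1 _ _ hT) x
  have hyT : y ∈ T := by
    have hm : m ∈ palette (Function.update g m {x}) x := by simp [mem_palette]
    rw [← hy] at hm
    simpa [mem_palette] using hm
  have hTsub : T.Subsingleton := by
    simpa using hI.subsingleton_of_eq_singleton hT (Function.update_self m {x} g)
  exact ⟨y, hTsub.eq_singleton_of_mem hyT ▸ hT⟩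

theorem IsColInvariant.exists_continuation_rel [Nontrivial (Fin k)] {F : Type}
    (hI : IsColInvariant G H k Inv) {g : Fin k → Set G.V} {h : Fin k → Set H.V} (hgh : Inv g h)
    (m : Fin k) (a : RbAtom G.V F) :
    ∃ g' h' a', IsContinuation Inv {m}ᶜ g h g' h' ∧ RbAtom.Rel (PinnedAt g' h' m) a a' := by
  have hrefl : IsContinuation Inv {m}ᶜ g h g h := .refl hgh
  cases a with
  | green x =>
    obtain ⟨y, hxy⟩ := hI.exists_singleton_response hgh m x
    exact ⟨_, _, .green y, .update hxy,
      .green ⟨Function.update_self .., Function.update_self ..⟩⟩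
  | id => exact ⟨g, h, _, hrefl, .id⟩
  | black => exact ⟨g, h, _, hrefl, .black⟩
  | white => exact ⟨g, h, _, hrefl, .white⟩
  | yellow => exact ⟨g, h, _, hrefl, .yellow⟩
  | red j j' => exact ⟨g, h, _, hrefl, .red j j'⟩

end Continuation

/-! ### Agreement in all continuations -/

/-- Elements of two rainbow algebras that agree along the pinned vertices of every position of `Inv`
in which the colours in `C` are as in `(g₀, h₀)`. With the pebble colours as `C`, this is the
relation that is shown to be preserved by the operations. -/
def StablyAgree {V W F : Type} {k : ℕ} (Inv : (Fin k → Set V) → (Fin k → Set W) → Prop)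
    (C : Set (Fin k)) (g₀ : Fin k → Set V) (h₀ : Fin k → Set W)
    (X : Set (RbAtom V F)) (Y : Set (RbAtom W F)) : Prop :=
  ∀ ⦃g h⦄, IsContinuation Inv C g₀ h₀ g h → AgreeAlong (Pinned g h) X Y

theorem StablyAgree.flip {V W F : Type} {k : ℕ} {Inv : (Fin k → Set V) → (Fin k → Set W) → Prop}
    {C : Set (Fin k)} {g₀ : Fin k → Set V} {h₀ : Fin k → Set W} {X : Set (RbAtom V F)}
    {Y : Set (RbAtom W F)} (hXY : StablyAgree Inv C g₀ h₀ X Y) :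
    StablyAgree (flip Inv) C h₀ g₀ Y X :=
  fun _ _ hcont => (hXY hcont.flip).flip.mono fun _ _ => Pinned.symm

theorem exists_ne_notMem_of_two_lt_ncard_compl {ι : Type*} {C : Set ι} (hC : 2 < Cᶜ.ncard) (m : ι) :
    ∃ n₁ ∉ C, ∃ n₂ ∉ C, n₁ ≠ m ∧ n₂ ≠ m ∧ n₁ ≠ n₂ := by
  have hfin : Cᶜ.Finite := Set.finite_of_ncard_pos (by omega)
  have hcard := Set.pred_ncard_le_ncard_sdiff_singleton Cᶜ m
  obtain ⟨n₁, ⟨hC₁, hm₁⟩, n₂, ⟨hC₂, hm₂⟩, hne⟩ :=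
    (Set.one_lt_ncard hfin.sdiff).1 (show 1 < (Cᶜ \ {m}).ncard by omega)
  exact ⟨n₁, hC₁, n₂, hC₂, hm₁, hm₂, hne⟩

section Term

variable {G H F : BinStruct σ} {k : ℕ} {Inv : (Fin k → Set G.V) → (Fin k → Set H.V) → Prop}
  {C : Set (Fin k)} {g₀ : Fin k → Set G.V} {h₀ : Fin k → Set H.V}

theorem StablyAgree.mem_rbComp (hI : IsColInvariant G H k Inv) (hC : 2 < Cᶜ.ncard)
    {X Y : Set (RbAtom G.V F.V)} {X' Y' : Set (RbAtom H.V F.V)}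
    (hX : StablyAgree Inv C g₀ h₀ X X') (hY : StablyAgree Inv C g₀ h₀ Y Y')
    {g : Fin k → Set G.V} {h : Fin k → Set H.V} (hgh : IsContinuation Inv C g₀ h₀ g h)
    {c : RbAtom G.V F.V} {c' : RbAtom H.V F.V} (hcc' : RbAtom.Rel (Pinned g h) c c')
    (hc : c ∈ rbComp G F X Y) : c' ∈ rbComp H F X' Y' := by
  obtain ⟨a, haX, b, hbY, habc⟩ := hc
  have : Nonempty (Fin k) := ⟨(Set.nonempty_of_ncard_ne_zero (by omega : Cᶜ.ncard ≠ 0)).some⟩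
  obtain ⟨m, hm⟩ := hcc'.exists_of_exists
  obtain ⟨n₁, hn₁, n₂, hn₂, hn₁m, hn₂m, hne⟩ := exists_ne_notMem_of_two_lt_ncard_compl hC m
  have : Nontrivial (Fin k) := ⟨n₁, n₂, hne⟩
  obtain ⟨g₁, h₁, a', hcont₁, ha⟩ := hI.exists_continuation_rel hgh.mem n₁ a
  obtain ⟨g₂, h₂, b', hcont₂, hb⟩ := hI.exists_continuation_rel hcont₁.mem n₂ b
  have ha₂ : RbAtom.Rel (Pinned g₂ h₂) a a' :=
    ha.mono fun _ _ hxy => ⟨n₁, hcont₂.pinnedAt hne hxy⟩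
  have hb₂ : RbAtom.Rel (Pinned g₂ h₂) b b' := hb.mono fun _ _ hxy => ⟨n₂, hxy⟩
  have hc₂ : RbAtom.Rel (Pinned g₂ h₂) c c' :=
    hm.mono fun _ _ hxy => ⟨m, hcont₂.pinnedAt hn₂m.symm (hcont₁.pinnedAt hn₁m.symm hxy)⟩
  have hgh₂ : IsContinuation Inv C g₀ h₀ g₂ h₂ :=
    (hgh.trans hcont₁ (Set.subset_compl_singleton_iff.2 hn₁)).trans hcont₂
      (Set.subset_compl_singleton_iff.2 hn₂)
  have hiso : IsPartialIso G H (Pinned g₂ h₂) := isPartialIso_pinned (hI.2.1 _ _ hgh₂.mem)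
  exact ⟨a', (hX hgh₂ ha₂).1 haX, b', (hY hgh₂ hb₂).1 hbY,
    fun hf => habc (hf.map hiso.flip ha₂.flip hb₂.flip hc₂.flip)⟩

theorem isLogicalRelation_stablyAgree (hI : IsColInvariant G H k Inv) (hC : 2 < Cᶜ.ncard) :
    (rbOps G F).IsLogicalRelation (rbOps H F) (StablyAgree Inv C g₀ h₀) where
  bot _ _ _ _ _ _ := Iff.rfl
  top _ _ _ _ _ _ := Iff.rfl
  one' _ _ _ _ _ hab := by cases hab <;> simp [rbOps]
  sup _ _ _ _ hX hY _ _ hgh _ _ hab := or_congr (hX hgh hab) (hY hgh hab)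
  inf _ _ _ _ hX hY _ _ hgh _ _ hab := and_congr (hX hgh hab) (hY hgh hab)
  compl _ _ hX _ _ hgh _ _ hab := not_congr (hX hgh hab)
  comp _ _ _ _ hX hY _ _ hgh _ _ hab := ⟨hX.mem_rbComp hI hC hY hgh hab,
    hX.flip.mem_rbComp hI.flip hC hY.flip hgh.flip (hab.flip.mono fun _ _ => Pinned.symm)⟩
  conv _ _ hX _ _ hgh _ _ hab := hX hgh hab.conv

theorem stablyAgree_of_mem (hI : IsColInvariant G H k Inv) {t : Fin k} (ht : t ∈ C)
    {X : Set (RbAtom G.V F.V)} {Y : Set (RbAtom H.V F.V)}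
    (hXY : AgreeAlong (fun x y => x ∈ g₀ t ↔ y ∈ h₀ t) X Y) : StablyAgree Inv C g₀ h₀ X Y := by
  refine fun g h hgh => hXY.mono fun x y hxy => ?_
  rw [← hgh.left ht, ← hgh.right ht]
  exact (Set.ext_iff.1 (hxy.palette_eq (hI.2.1 g h hgh.mem)) t).symm

end Term

/-! ### The mirroring strategy -/

section Mirror

variable {G H F : BinStruct σ} {c : ℕ}

theorem liftCol_injective : Function.Injective (liftCol : Fin c → Fin (c + 3)) :=
  Fin.castLE_injective (Nat.le_add_right c 3)

theorem ncard_compl_range_liftCol : (Set.range (liftCol : Fin c → Fin (c + 3)))ᶜ.ncard = 3 := by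
  rw [Set.ncard_compl, ← Set.image_univ, Set.ncard_image_of_injective _ liftCol_injective]
  simp

/-- The elements under pebble `i` of the two algebras have the same non-green atoms, and contain
matching green atoms for any two vertices that agree on wearing the colour of pebble `i`; this is
the invariant maintained by the mirroring strategy. -/
def PebblesAgree (α : Fin c → Option (Set (RbAtom G.V F.V)))
    (β : Fin c → Option (Set (RbAtom H.V F.V)))
    (g : Fin (c + 3) → Set G.V) (h : Fin (c + 3) → Set H.V) : Prop :=
  ∀ i X Y, α i = some X → β i = some Y →
    AgreeAlong (fun x y => x ∈ g (liftCol i) ↔ y ∈ h (liftCol i)) X Y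

theorem PebblesAgree.update {α : Fin c → Option (Set (RbAtom G.V F.V))}
    {β : Fin c → Option (Set (RbAtom H.V F.V))} {g : Fin (c + 3) → Set G.V}
    {h : Fin (c + 3) → Set H.V} (hag : PebblesAgree α β g h) (t : Fin c)
    {X : Set (RbAtom G.V F.V)} {Y : Set (RbAtom H.V F.V)} {S : Set G.V} {T : Set H.V}
    (hXY : AgreeAlong (fun x y => x ∈ S ↔ y ∈ T) X Y) :
    PebblesAgree (Function.update α t (some X)) (Function.update β t (some Y))
      (Function.update g (liftCol t) S) (Function.update h (liftCol t) T) := by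
  intro i X' Y' hX' hY'
  obtain rfl | hit := eq_or_ne i t
  · simp only [Function.update_self, Option.some.injEq] at hX' hY' ⊢
    rwa [← hX', ← hY']
  · simp only [Function.update_of_ne hit, Function.update_of_ne (liftCol_injective.ne hit)]
      at hX' hY' ⊢
    exact hag i X' Y' hX' hY'

variable {Inv : (Fin (c + 3) → Set G.V) → (Fin (c + 3) → Set H.V) → Prop} {s : MirrorState c G H F}

theorem MirrorReachable.inv (hI : IsColInvariant G H (c + 3) Inv)
    (hs : MirrorReachable G H F c Inv s) : Inv s.g s.h := by
  cases hs with
  | refl => exact hI.1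
  | tail _ hstep => cases hstep <;> assumption

theorem MirrorReachable.pebblesAgree (hs : MirrorReachable G H F c Inv s) :
    PebblesAgree s.α s.β s.g s.h := by
  induction hs with
  | refl => exact fun _ _ _ hX => nomatch hX
  | tail _ hstep ih =>
    cases hstep with
    | fromG t X T => exact ih.update t (agreeAlong_mirrorElt X T)
    | fromH t Y S => exact ih.update t ((agreeAlong_mirrorElt Y S).flip.mono fun _ _ => Iff.symm)

end Mirror

theorem mirror_nonGreen_eq {σ : Type} (G H F : BinStruct σ) (c : ℕ)
    (Inv : (Fin (c + 3) → Set G.V) → (Fin (c + 3) → Set H.V) → Prop)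
    (hInv : IsColInvariant G H (c + 3) Inv)
    (s : MirrorState c G H F) (hs : MirrorReachable G H F c Inv s)
    (t : RATerm c) (X : Set (RbAtom G.V F.V)) (Y : Set (RbAtom H.V F.V))
    (hX : t.evalo (rbOps G F) s.α = some X) (hY : t.evalo (rbOps H F) s.β = some Y) :
    (RbAtom.id ∈ X ↔ RbAtom.id ∈ Y) ∧ (RbAtom.black ∈ X ↔ RbAtom.black ∈ Y) ∧
    (RbAtom.white ∈ X ↔ RbAtom.white ∈ Y) ∧ (RbAtom.yellow ∈ X ↔ RbAtom.yellow ∈ Y) ∧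
    (∀ j j' : F.V, RbAtom.red j j' ∈ X ↔ RbAtom.red j j' ∈ Y) := by
  have hinv : Inv s.g s.h := hs.inv hInv
  have hpebbles i A B (hA : s.α i = some A) (hB : s.β i = some B) :
      StablyAgree Inv (Set.range liftCol) s.g s.h A B :=
    stablyAgree_of_mem hInv (Set.mem_range_self i) (hs.pebblesAgree i A B hA hB)
  have hlogical : (rbOps G F).IsLogicalRelation (rbOps H F)
      (StablyAgree Inv (Set.range liftCol) s.g s.h) :=
    isLogicalRelation_stablyAgree hInv (by simp [ncard_compl_range_liftCol])
  have hXY : AgreeAlong (Pinned s.g s.h) X Y :=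
    hlogical.evalo hpebbles t hX hY (.refl hinv)
  exact ⟨hXY .id, hXY .black, hXY .white, hXY .yellow, fun j j' => hXY (.red j j')⟩
end
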